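/- arXiv:2307.05859 — 4 statements merged into one kernel-verified Lean document; each statement's English description precedes it below -/
import Mathlib

section
/- Let B be a k-domain with an effective Z^n-grading for some integer n ≥ 1. Then there exist nonzero homogeneous elements f_1,…,f_n ∈ B and elements w_1,…,w_n in the localization S^{−1}B, where S ⊆ B is the multiplicatively closed set generated by f_1,…,f_n, such that S^{−1}B = (S^{−1}B)_0[w_1, w_1^{−1},…, w_n, w_n^{−1}] is isomorphic to the Laurent polynomial ring in n variables over the degree-zero part (S^{−1}B)_0. -/
/-!
Effectiveness means that every degree is a difference of two weights, so each basis vector `bᵢ` of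
the grading group is `deg xᵢ - deg yᵢ` for nonzero homogeneous `xᵢ, yᵢ`. Take `fᵢ = xᵢ yᵢ`. The
set `S` generated by the `fᵢ` consists of homogeneous elements, so `S⁻¹B` is again graded, and it
contains the units `wᵢ = xᵢ / yᵢ` of degree `bᵢ`. Monomials in the `wᵢ` are units of every degree,
and dividing by them moves each graded piece onto the degree-zero part.
-/

open DirectSum SetLike

section GradedUnits

variable {k L G : Type*} [CommSemiring k] [CommSemiring L] [Algebra k L]
  [AddCommGroup G] [DecidableEq G] (ℒ : G → Submodule k L) [GradedAlgebra ℒ]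

lemma units_inv_mem_neg {u : Lˣ} {d : G} (hu : (u : L) ∈ ℒ d) :
    ((u⁻¹ : Lˣ) : L) ∈ ℒ (-d) := by
  have hmul : (u : L) * decompose ℒ (u⁻¹ : Lˣ).val (-d) = 1 := by
    rw [← coe_decompose_mul_add_of_left_mem ℒ hu, Units.mul_inv, add_neg_cancel,
      decompose_of_mem_same ℒ GradedOne.one_mem]
  rw [Units.inv_eq_of_mul_eq_one_right hmul]
  exact coe_mem _

lemma exists_monoidHom_units_homogeneous {ι : Type*} (b : Module.Basis ι ℤ G) (w : ι → Lˣ)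
    (hw : ∀ i, (w i : L) ∈ ℒ (b i)) :
    ∃ W : Multiplicative G →* Lˣ, (∀ i, W (.ofAdd (b i)) = w i) ∧
      ∀ g, (W (.ofAdd g) : L) ∈ ℒ g := by
  let W : Multiplicative G →* Lˣ :=
    (b.constr ℤ fun i ↦ Additive.ofMul (w i)).toAddMonoidHom.toMultiplicativeLeft
  have hWb (i : ι) : W (.ofAdd (b i)) = w i := by simp [W]
  refine ⟨W, hWb, fun g ↦ ?_⟩
  have hg : g ∈ AddSubgroup.closure (Set.range b) := by
    rw [← Submodule.span_int_eq_addSubgroupClosure, b.span_eq]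
    trivial
  induction hg using AddSubgroup.closure_induction with
  | mem _ hx =>
    obtain ⟨i, rfl⟩ := hx
    exact hWb i ▸ hw i
  | zero => simpa using GradedOne.one_mem
  | add x y _ _ hx hy => simpa using GradedMul.mul_mem hx hy
  | neg x _ hx => simpa using units_inv_mem_neg ℒ hx

variable (W : Multiplicative G →* Lˣ)

/-- Evaluation of Laurent polynomials over the degree-zero part `ℒ 0`, the monomial of exponent
`g` being sent to the unit `W g`; the group algebra of `G` plays the role of the Laurent polynomial
ring. -/
noncomputable def laurentEval :
    AddMonoidAlgebra (GradeZero.subalgebra ℒ) G →ₐ[GradeZero.subalgebra ℒ] L :=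
  AddMonoidAlgebra.lift _ L G ((Units.coeHom L).comp W)

lemma laurentEval_single (g : G) (r : GradeZero.subalgebra ℒ) :
    laurentEval ℒ W (.single g r) = r * W (.ofAdd g) := by
  simp [laurentEval, Algebra.smul_def]

variable {W}

lemma coe_decompose_laurentEval (hW : ∀ g, (W (.ofAdd g) : L) ∈ ℒ g)
    (p : AddMonoidAlgebra (GradeZero.subalgebra ℒ) G) (g : G) :
    (decompose ℒ (laurentEval ℒ W p) g : L) = p.coeff g * W (.ofAdd g) := by
  induction p using AddMonoidAlgebra.induction_linear with
  | zero => simp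
  | add p q hp hq => simp [hp, hq, add_mul]
  | single a r =>
    have hmem : (r : L) * W (.ofAdd a) ∈ ℒ a := by
      simpa using GradedMul.mul_mem r.2 (hW a)
    rw [laurentEval_single]
    obtain rfl | hne := eq_or_ne a g
    · rw [decompose_of_mem_same ℒ hmem]
      simp
    · rw [decompose_of_mem_ne ℒ hmem hne]
      simp [Finsupp.single_eq_of_ne' hne]

lemma laurentEval_injective (hW : ∀ g, (W (.ofAdd g) : L) ∈ ℒ g) :
    Function.Injective (laurentEval ℒ W) := by
  intro p q hpq
  ext g
  rw [← (W (.ofAdd g)).mul_left_inj, ← coe_decompose_laurentEval ℒ hW,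
    ← coe_decompose_laurentEval ℒ hW, hpq]

lemma laurentEval_surjective (hW : ∀ g, (W (.ofAdd g) : L) ∈ ℒ g) :
    Function.Surjective (laurentEval ℒ W) := by
  intro x
  induction x using Decomposition.inductionOn ℒ with
  | zero => exact ⟨0, map_zero _⟩
  | add x y hx hy =>
    obtain ⟨p, rfl⟩ := hx
    obtain ⟨q, rfl⟩ := hy
    exact ⟨p + q, map_add ..⟩
  | @homogeneous g x =>
    have hmem : (x : L) * ((W (.ofAdd g))⁻¹ : Lˣ) ∈ ℒ 0 := by
      simpa using GradedMul.mul_mem x.2 (units_inv_mem_neg ℒ (hW g))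
    exact ⟨.single g ⟨_, hmem⟩, by rw [laurentEval_single, Units.inv_mul_cancel_right]⟩

theorem exists_algEquiv_addMonoidAlgebra_gradeZero {ι : Type*} (b : Module.Basis ι ℤ G)
    (w : ι → Lˣ) (hw : ∀ i, (w i : L) ∈ ℒ (b i)) :
    ∃ e : L ≃ₐ[k] AddMonoidAlgebra (GradeZero.subalgebra ℒ) G,
      (∀ x : GradeZero.subalgebra ℒ, e x = .single 0 x) ∧ ∀ i, e (w i) = .single (b i) 1 := by
  obtain ⟨W, hWb, hW⟩ := exists_monoidHom_units_homogeneous ℒ b w hw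
  let e := AlgEquiv.ofBijective ((laurentEval ℒ W).restrictScalars k)
    ⟨laurentEval_injective ℒ hW, laurentEval_surjective ℒ hW⟩
  have e_single (g : G) (r : GradeZero.subalgebra ℒ) : e (.single g r) = r * W (.ofAdd g) :=
    laurentEval_single ℒ W g r
  refine ⟨e.symm, fun x ↦ ?_, fun i ↦ ?_⟩
  · simp [AlgEquiv.symm_apply_eq, e_single]
  · simp [AlgEquiv.symm_apply_eq, e_single, hWb]

end GradedUnits

lemma directSum_of_congr {k L G : Type*} [Semiring k] [AddCommMonoid L] [Module k L]
    [DecidableEq G] {ℒ : G → Submodule k L} {i j : G} {x : ℒ i} {y : ℒ j}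
    (hij : i = j) (hxy : (x : L) = y) :
    of (fun g ↦ ℒ g) i x = of (fun g ↦ ℒ g) j y := by
  subst hij
  rw [Subtype.ext hxy]

section FractionGrading

open IsLocalization

variable {k B G : Type*} [CommSemiring k] [CommSemiring B] [Algebra k B]

section AddCommMonoid

variable [AddCommMonoid G] (𝒜 : G → Submodule k B) [GradedMonoid 𝒜] (S : Submonoid B)
  (L : Type*) [CommSemiring L] [Algebra k L] [Algebra B L] [IsScalarTower k B L]
  [IsLocalization S L]

/-- The degree-`g` part of the localization `L = S⁻¹B` of a graded algebra `B`: the fractions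
`u / v` with `v ∈ S` homogeneous of some degree `d` and `u` homogeneous of degree `g + d`. -/
def fractionGrading (g : G) : Submodule k L where
  carrier := {x | ∃ d, ∃ u ∈ 𝒜 (g + d), ∃ v : S, (v : B) ∈ 𝒜 d ∧ mk' L u v = x}
  zero_mem' := ⟨0, 0, zero_mem _, 1, GradedOne.one_mem, mk'_zero 1⟩
  add_mem' := by
    rintro _ _ ⟨d, u, hu, v, hv, rfl⟩ ⟨d', u', hu', v', hv', rfl⟩
    refine ⟨d + d', u * v' + u' * v, add_mem ?_ ?_, v * v', GradedMul.mul_mem hv hv',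
      mk'_add ..⟩
    · simpa only [add_assoc] using GradedMul.mul_mem hu hv'
    · simpa only [add_assoc, add_comm d' d] using GradedMul.mul_mem hu' hv
  smul_mem' := by
    rintro c _ ⟨d, u, hu, v, hv, rfl⟩
    refine ⟨d, c • u, Submodule.smul_mem _ c hu, v, hv, ?_⟩
    rw [← algebraMap_smul B c u, ← algebraMap_smul B c (mk' L u v), smul_mk', smul_eq_mul]

variable {𝒜 S}

lemma mem_fractionGrading {g : G} {x : L} :
    x ∈ fractionGrading 𝒜 S L g ↔
      ∃ d, ∃ u ∈ 𝒜 (g + d), ∃ v : S, (v : B) ∈ 𝒜 d ∧ mk' L u v = x := Iff.rfl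

lemma algebraMap_mem_fractionGrading {g : G} {b : B} (hb : b ∈ 𝒜 g) :
    algebraMap B L b ∈ fractionGrading 𝒜 S L g :=
  ⟨0, b, by rwa [add_zero], 1, GradedOne.one_mem, mk'_one L b⟩

instance fractionGrading.gradedMonoid : GradedMonoid (fractionGrading 𝒜 S L) where
  one_mem := by simpa using algebraMap_mem_fractionGrading (S := S) L GradedOne.one_mem
  mul_mem := by
    rintro i j _ _ ⟨d, u, hu, v, hv, rfl⟩ ⟨d', u', hu', v', hv', rfl⟩
    refine ⟨d + d', u * u', ?_, v * v', GradedMul.mul_mem hv hv', mk'_mul ..⟩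
    rw [add_add_add_comm]
    exact GradedMul.mul_mem hu hu'

lemma coe_gradeZero_fractionGrading :
    (GradeZero.subalgebra (fractionGrading 𝒜 S (Localization S)) : Set (Localization S)) =
      {x | ∃ (g : G) (u v : B) (hv : v ∈ S),
        u ∈ 𝒜 g ∧ v ∈ 𝒜 g ∧ x = Localization.mk u ⟨v, hv⟩} := by
  ext x
  refine (mem_fractionGrading (Localization S) (g := 0)).trans ?_
  simp only [zero_add, Subtype.exists, Set.mem_ofPred_eq, Localization.mk_eq_mk',
    eq_comm (a := x), exists_and_left]

end AddCommMonoid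

variable [AddCommGroup G] [DecidableEq G] (𝒜 : G → Submodule k B) [GradedAlgebra 𝒜]
  (S : Submonoid B) (L : Type*) [CommSemiring L] [Algebra k L] [Algebra B L]
  [IsScalarTower k B L] [IsLocalization S L]

/-- Splits `b` into the images in `L` of its homogeneous components. -/
noncomputable def toFractionComponents : B →ₐ[k] ⨁ g, fractionGrading 𝒜 S L g :=
  (toAlgebra k (fun g ↦ 𝒜 g)
    (fun g ↦ lof k G (fun g ↦ fractionGrading 𝒜 S L g) g ∘ₗ
      (IsScalarTower.toAlgHom k B L).toLinearMap.restrict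
        fun _ hb ↦ by simpa using algebraMap_mem_fractionGrading L hb)
    (by
      rw [LinearMap.comp_apply, lof_eq_of]
      exact directSum_of_congr rfl <| map_one (algebraMap B L))
    (by
      intro _ _ a b
      simp only [LinearMap.comp_apply, lof_eq_of, of_mul_of]
      exact directSum_of_congr rfl <| map_mul (algebraMap B L) _ _)).comp
  (decomposeAlgEquiv 𝒜).toAlgHom

variable {𝒜}

lemma toFractionComponents_of_mem {g : G} {b : B} (hb : b ∈ 𝒜 g) :
    toFractionComponents 𝒜 S L b =
      of (fun g ↦ fractionGrading 𝒜 S L g) g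
        ⟨algebraMap B L b, algebraMap_mem_fractionGrading L hb⟩ := by
  rw [toFractionComponents, AlgHom.comp_apply, AlgEquiv.toAlgHom_apply, decomposeAlgEquiv_apply,
    decompose_of_mem 𝒜 hb, toAlgebra_apply]
  exact toSemiring_of ..

lemma coeAlgHom_toFractionComponents (b : B) :
    coeAlgHom (fractionGrading 𝒜 S L) (toFractionComponents 𝒜 S L b) = algebraMap B L b := by
  induction b using Decomposition.inductionOn 𝒜 with
  | zero => simp
  | add a b ha hb => rw [map_add, map_add, map_add, ha, hb]
  | homogeneous b => simp [toFractionComponents_of_mem S L b.2]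

variable {S}

lemma isUnit_toFractionComponents (hS : S ≤ homogeneousSubmonoid 𝒜) (v : S) :
    IsUnit (toFractionComponents 𝒜 S L v) := by
  obtain ⟨d, hd⟩ := hS v.2
  have hinv : mk' L 1 v ∈ fractionGrading 𝒜 S L (-d) :=
    ⟨d, 1, by rw [neg_add_cancel]; exact GradedOne.one_mem, v, hd, rfl⟩
  refine .of_mul_eq_one (of _ (-d) ⟨_, hinv⟩) ?_
  rw [toFractionComponents_of_mem S L hd, of_mul_of]
  exact directSum_of_congr (add_neg_cancel d) <| (mk'_spec' L 1 v).trans (map_one _)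

/-- Splits an element of `L = S⁻¹B` into its homogeneous components, as the extension of
`toFractionComponents` to the localization. -/
noncomputable def decomposeFraction (hS : S ≤ homogeneousSubmonoid 𝒜) :
    L →ₐ[k] ⨁ g, fractionGrading 𝒜 S L g :=
  liftAlgHom (isUnit_toFractionComponents L hS)

lemma decomposeFraction_algebraMap (hS : S ≤ homogeneousSubmonoid 𝒜) (b : B) :
    decomposeFraction L hS (algebraMap B L b) = toFractionComponents 𝒜 S L b :=
  lift_eq _ b

lemma decomposeFraction_coe (hS : S ≤ homogeneousSubmonoid 𝒜) {g : G}
    (x : fractionGrading 𝒜 S L g) :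
    decomposeFraction L hS x = of (fun g ↦ fractionGrading 𝒜 S L g) g x := by
  obtain ⟨_, d, u, hu, v, hv, rfl⟩ := x
  apply (isUnit_toFractionComponents L hS v).mul_right_cancel
  rw [← decomposeFraction_algebraMap L hS, ← map_mul, mk'_spec, decomposeFraction_algebraMap,
    decomposeFraction_algebraMap, toFractionComponents_of_mem S L hu,
    toFractionComponents_of_mem S L hv, of_mul_of]
  exact directSum_of_congr rfl (mk'_spec L u v).symm

lemma coeAlgHom_comp_decomposeFraction (hS : S ≤ homogeneousSubmonoid 𝒜) :
    (coeAlgHom (fractionGrading 𝒜 S L)).comp (decomposeFraction L hS) = AlgHom.id k L := by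
  apply AlgHom.coe_ringHom_injective
  apply ringHom_ext S
  ext b
  simp [decomposeFraction_algebraMap, coeAlgHom_toFractionComponents]

/-- The grading of `S⁻¹B` induced by the one of `B` when `S` consists of homogeneous elements. It
depends on `hS`, hence is not an instance. -/
noncomputable abbrev fractionGradedAlgebra (hS : S ≤ homogeneousSubmonoid 𝒜) :
    GradedAlgebra (fractionGrading 𝒜 S L) :=
  .ofAlgHom _ (decomposeFraction L hS) (coeAlgHom_comp_decomposeFraction L hS)
    fun _ ↦ decomposeFraction_coe L hS

lemma exists_unit_mem_fractionGrading_sub (hS : S ≤ homogeneousSubmonoid 𝒜) {x y : B} {c d : G}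
    (hx : x ∈ 𝒜 c) (hy : y ∈ 𝒜 d) (hxy : x * y ∈ S) :
    ∃ w : Lˣ, (w : L) ∈ fractionGrading 𝒜 S L (c - d) := by
  let _ := fractionGradedAlgebra L hS
  have hunit : IsUnit (algebraMap B L x * algebraMap B L y) := by
    rw [← map_mul]
    exact map_units L (⟨x * y, hxy⟩ : S)
  obtain ⟨u, hu⟩ := isUnit_of_mul_isUnit_left hunit
  obtain ⟨v, hv⟩ := isUnit_of_mul_isUnit_right hunit
  have hu_mem : (u : L) ∈ fractionGrading 𝒜 S L c := hu ▸ algebraMap_mem_fractionGrading L hx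
  have hv_mem : (v : L) ∈ fractionGrading 𝒜 S L d := hv ▸ algebraMap_mem_fractionGrading L hy
  refine ⟨u * v⁻¹, ?_⟩
  rw [sub_eq_add_neg, Units.val_mul]
  exact GradedMul.mul_mem hu_mem (units_inv_mem_neg _ hv_mem)

end FractionGrading

section Weights

variable {k B G : Type*} [CommSemiring k] [CommSemiring B] [Nontrivial B] [NoZeroDivisors B]
  [Algebra k B]

/-- The weight monoid of a graded domain: the degrees of its nonzero homogeneous elements. -/
def weightMonoid [AddMonoid G] (𝒜 : G → Submodule k B) [GradedMonoid 𝒜] : AddSubmonoid G where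
  carrier := {g | 𝒜 g ≠ ⊥}
  zero_mem' := (Submodule.ne_bot_iff _).2 ⟨1, GradedOne.one_mem, one_ne_zero⟩
  add_mem' := by
    intro g h hg hh
    obtain ⟨x, hx, hx0⟩ := (Submodule.ne_bot_iff _).1 hg
    obtain ⟨y, hy, hy0⟩ := (Submodule.ne_bot_iff _).1 hh
    exact (Submodule.ne_bot_iff _).2 ⟨x * y, GradedMul.mul_mem hx hy, mul_ne_zero hx0 hy0⟩

variable [AddCommGroup G]

lemma exists_sub_of_mem_addSubgroupClosure (M : AddSubmonoid G) {g : G}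
    (hg : g ∈ AddSubgroup.closure (M : Set G)) : ∃ a ∈ M, ∃ b ∈ M, a - b = g := by
  rw [← AddSubgroup.mem_toAddSubmonoid, AddSubgroup.closure_toAddSubmonoid,
    AddSubmonoid.closure_union, AddSubmonoid.closure_neg, AddSubmonoid.closure_eq,
    AddSubmonoid.mem_sup] at hg
  obtain ⟨a, ha, b, hb, rfl⟩ := hg
  exact ⟨a, ha, -b, hb, sub_neg_eq_add a b⟩

lemma exists_ne_zero_mem_of_closure_weights_eq_top (𝒜 : G → Submodule k B) [GradedMonoid 𝒜]
    (heff : AddSubgroup.closure {g : G | 𝒜 g ≠ ⊥} = ⊤) (g : G) :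
    ∃ (c d : G) (x y : B), x ∈ 𝒜 c ∧ y ∈ 𝒜 d ∧ x * y ≠ 0 ∧ c - d = g := by
  have hg : g ∈ AddSubgroup.closure (weightMonoid 𝒜 : Set G) := heff ▸ AddSubgroup.mem_top g
  obtain ⟨c, hc, d, hd, hcd⟩ := exists_sub_of_mem_addSubgroupClosure _ hg
  obtain ⟨x, hx, hx0⟩ := (Submodule.ne_bot_iff _).1 hc
  obtain ⟨y, hy, hy0⟩ := (Submodule.ne_bot_iff _).1 hd
  exact ⟨c, d, x, y, hx, hy, mul_ne_zero hx0 hy0, hcd⟩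

end Weights

theorem localization_laurent_of_effective_grading_general
    {k B G ι : Type*} [CommSemiring k] [CommSemiring B] [Nontrivial B] [NoZeroDivisors B]
    [Algebra k B] [AddCommGroup G] [DecidableEq G] (b : Module.Basis ι ℤ G)
    (𝒜 : G → Submodule k B) [GradedAlgebra 𝒜]
    (heff : AddSubgroup.closure {g : G | 𝒜 g ≠ ⊥} = ⊤) :
    ∃ f : ι → B, (∀ i, f i ≠ 0) ∧ (∀ i, ∃ g : G, f i ∈ 𝒜 g) ∧
      ∃ (R₀ : Subalgebra k (Localization (Submonoid.closure (Set.range f))))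
        (w : ι → (Localization (Submonoid.closure (Set.range f)))ˣ)
        (e : Localization (Submonoid.closure (Set.range f)) ≃ₐ[k] AddMonoidAlgebra R₀ G),
        (R₀ : Set (Localization (Submonoid.closure (Set.range f)))) =
          {x | ∃ (g : G) (u v : B) (hv : v ∈ Submonoid.closure (Set.range f)),
            u ∈ 𝒜 g ∧ v ∈ 𝒜 g ∧ x = Localization.mk u ⟨v, hv⟩} ∧
        (∀ x : R₀, e (x : Localization (Submonoid.closure (Set.range f))) =
          AddMonoidAlgebra.single 0 x) ∧
        (∀ i, e (w i : Localization (Submonoid.closure (Set.range f))) =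
          AddMonoidAlgebra.single (b i) 1) := by
  choose c d x y hx hy hxy hcd using
    fun i ↦ exists_ne_zero_mem_of_closure_weights_eq_top 𝒜 heff (b i)
  have hf (i : ι) : IsHomogeneousElem 𝒜 (x i * y i) := ⟨_, GradedMul.mul_mem (hx i) (hy i)⟩
  refine ⟨fun i ↦ x i * y i, hxy, hf, ?_⟩
  set S := Submonoid.closure (Set.range fun i ↦ x i * y i)
  have hS : S ≤ homogeneousSubmonoid 𝒜 := Submonoid.closure_le.2 (Set.range_subset_iff.2 hf)
  choose w hw using fun i ↦ exists_unit_mem_fractionGrading_sub (Localization S) hS (hx i) (hy i)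
    (Submonoid.subset_closure ⟨i, rfl⟩)
  let _ := fractionGradedAlgebra (Localization S) hS
  obtain ⟨e, he_zero, he_w⟩ := exists_algEquiv_addMonoidAlgebra_gradeZero
    (fractionGrading 𝒜 S (Localization S)) b w fun i ↦ hcd i ▸ hw i
  exact ⟨_, w, e, coe_gradeZero_fractionGrading, he_zero, he_w⟩

/-- If the `k`-domain `B` has an effective `ℤⁿ`-grading (`n ≥ 1`), then there are
nonzero homogeneous `f_1, …, f_n` such that, with `S` the multiplicative set they generate,
`S⁻¹B` is the Laurent polynomial ring over its degree-zero part `(S⁻¹B)₀` in suitable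
homogeneous units `w_1, …, w_n`. -/
theorem localization_laurent_of_effective_grading
    (k B : Type*) [Field k] [CommRing B] [IsDomain B] [Algebra k B]
    (n : ℕ) (hn : 1 ≤ n)
    (𝒜 : (Fin n → ℤ) → Submodule k B) [GradedAlgebra 𝒜]
    (heff : AddSubgroup.closure {g : Fin n → ℤ | 𝒜 g ≠ ⊥} = ⊤) :
    ∃ f : Fin n → B, (∀ i, f i ≠ 0) ∧ (∀ i, ∃ g : Fin n → ℤ, f i ∈ 𝒜 g) ∧
      ∃ (R₀ : Subalgebra k (Localization (Submonoid.closure (Set.range f))))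
        (w : Fin n → (Localization (Submonoid.closure (Set.range f)))ˣ)
        (e : Localization (Submonoid.closure (Set.range f)) ≃ₐ[k]
              AddMonoidAlgebra R₀ (Fin n → ℤ)),
        -- `R₀` is the degree-zero part of `S⁻¹B`
        (R₀ : Set (Localization (Submonoid.closure (Set.range f)))) =
          {x | ∃ (g : Fin n → ℤ) (u v : B) (hv : v ∈ Submonoid.closure (Set.range f)),
            u ∈ 𝒜 g ∧ v ∈ 𝒜 g ∧ x = Localization.mk u ⟨v, hv⟩} ∧
        -- the isomorphism identifies `S⁻¹B` with `R₀[w_1, w_1⁻¹, …, w_n, w_n⁻¹]`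
        (∀ x : R₀, e (x : Localization (Submonoid.closure (Set.range f))) =
          AddMonoidAlgebra.single 0 x) ∧
        (∀ i : Fin n, e ((w i : Localization (Submonoid.closure (Set.range f)))) =
          AddMonoidAlgebra.single (Pi.single i 1) 1) := by
  simpa only [Pi.basisFun_apply] using
    localization_laurent_of_effective_grading_general (Pi.basisFun ℤ (Fin n)) 𝒜 heff
end

section
/- Assume k is algebraically closed. Let B be an affine unique factorization domain of dimension d ≥ 1 over k with an effective Z^{d−1}-grading. Then B is rational over k, i.e., frac(B) ≅_k k(x_1,…,x_d). -/
/-!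
Inverting a homogeneous element of `B` produces a homogeneous unit in every degree, since the
weights generate the grading group. Dividing by these units shows that the degree-zero part `A` of
the localization is an affine unique factorization domain of transcendence degree one, hence a
principal ideal domain, and that `Frac B = (Frac A)(t₁, …, t_{d-1})` for units `tⱼ` of degree `eⱼ`.

It remains to see that `K = Frac A` is `k(f)` for some `f`. Choose a Noether normalization
`k[x] ⊆ A`. The valuation rings of `K / k` not containing `x` are finitely many, and a nontrivial
automorphism `σ` of `k` fixing a suitable finite set of constants extends to an
automorphism `τ` of `K` that fixes `x`, preserves `A` and preserves the valuation of every element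
at each of them. Let `p` generate a maximal ideal of `A` containing `x - a`, where `σ a ≠ a`. Then
`f = τ p / p` is a unit at every place at infinity, and on `Spec A` it has one simple zero and one
simple pole, so it has degree one and `K = k(f)`.
-/

section FieldAutomorphisms

open MvPolynomial

variable {F k : Type*} [Field F] [Field k] [Algebra F k]

open scoped IntermediateField.algebraAdjoinAdjoin in
theorem linearIndependent_adjoin_range_of_algebraicIndependent {ι κ : Type*} {b : ι → k}
    (hb : AlgebraicIndependent F b) {e : κ → algebraicClosure F k} (he : LinearIndependent F e) :
    LinearIndependent (IntermediateField.adjoin F (Set.range b)) (fun i => (e i : k)) := by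
  rw [← LinearIndependent.iff_fractionRing (Algebra.adjoin F (Set.range b)), linearIndependent_iff']
  intro s g hg i hi
  have exists_aeval (j : κ) : ∃ q : MvPolynomial ι F, aeval b q = (g j : k) :=
    (Algebra.adjoin_range_eq_range_aeval F b).le (g j).2
  choose q hq using exists_aeval
  let Q : MvPolynomial ι (algebraicClosure F k) :=
    ∑ j ∈ s, C (e j) * MvPolynomial.map (algebraMap F (algebraicClosure F k)) (q j)
  have aeval_Q : aeval b Q = 0 := by
    rw [map_sum, ← hg]
    refine Finset.sum_congr rfl fun j _ => ?_
    rw [map_mul, aeval_map_algebraMap, hq, aeval_C, mul_comm]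
    rfl
  have Q_eq_zero : Q = 0 := hb.algebraicClosure (by rw [aeval_Q, map_zero])
  have q_eq_zero : q i = 0 := by
    ext m
    refine linearIndependent_iff'.1 he s (fun j => coeff m (q j)) ?_ i hi
    have := congrArg (coeff m) Q_eq_zero
    simp only [Q, coeff_sum, coeff_C_mul, coeff_map, coeff_zero] at this
    simpa only [Algebra.smul_def, mul_comm] using this
  exact Subtype.ext (by simp [← hq, q_eq_zero])

theorem exists_algEquiv_apply_ne_of_notMem [IsAlgClosed k] [Algebra.IsAlgebraic F k] {α : k}
    (hsep : IsSeparable F α) (hα : α ∉ (⊥ : Subalgebra F k)) : ∃ σ : k ≃ₐ[F] k, σ α ≠ α := by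
  have : Normal F k := normal_iff.2 fun y =>
    ⟨(Algebra.IsAlgebraic.isAlgebraic y).isIntegral, IsAlgClosed.splits _⟩
  obtain ⟨β, hne, hβ⟩ := (notMem_iff_exists_ne_and_isConjRoot hsep (this.splits α)).1 hα
  obtain ⟨σ, hσ⟩ := hβ.exists_algEquiv
  exact ⟨σ.symm, fun h => hne (h.symm.trans (σ.symm_apply_eq.2 hσ.symm))⟩

-- If no automorphism over `L(T)` moves anything, then `L(T)`, which is finite over the purely
-- transcendental `L`, contains the infinite extension `algebraicClosure F k` of `F`.
theorem exists_ringEquiv_fixing_finite_of_infinite_algebraicClosure [PerfectField F]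
    [IsAlgClosed k] (hinf : ¬ FiniteDimensional F (algebraicClosure F k)) {T : Set k}
    (hT : T.Finite) : ∃ σ : k ≃+* k, (∀ t ∈ T, σ t = t) ∧ ∃ a, σ a ≠ a := by
  by_contra! hfix
  obtain ⟨ι, b, hb⟩ := exists_isTranscendenceBasis' F k
  let L := IntermediateField.adjoin F (Set.range b)
  let M := IntermediateField.adjoin L T
  have : Algebra.IsAlgebraic L k := hb.isAlgebraic_field
  have : Algebra.IsAlgebraic M k := Algebra.IsAlgebraic.tower_top (K := L) M
  have : FiniteDimensional L M := by
    have := hT.to_subtype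
    exact IntermediateField.finiteDimensional_adjoin
      fun x _ => (Algebra.IsAlgebraic.isAlgebraic x).isIntegral
  have mem_M (α : algebraicClosure F k) : (α : k) ∈ M := by
    have hsep : IsSeparable F (α : k) :=
      (Algebra.IsSeparable.isSeparable F α).map (f := (algebraicClosure F k).val)
        (algebraicClosure F k).val.injective
    by_contra hα
    obtain ⟨σ, hσ⟩ := exists_algEquiv_apply_ne_of_notMem (F := M)
      ((hsep.tower_top L).tower_top M) (by rintro ⟨y, hy⟩; exact hα (hy ▸ y.2))
    exact hσ (hfix σ.toRingEquiv
      (fun t ht => σ.commutes ⟨t, IntermediateField.subset_adjoin _ _ ht⟩) α)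
  let e := Module.Basis.ofVectorSpace F (algebraicClosure F k)
  have hli : LinearIndependent L fun i => (⟨e i, mem_M _⟩ : M) :=
    LinearIndependent.of_comp M.val.toLinearMap
      (linearIndependent_adjoin_range_of_algebraicIndependent hb.1 e.linearIndependent)
  have := hli.finite
  exact hinf (Module.Finite.of_basis e)

theorem not_finiteDimensional_of_isAlgClosed_of_finite [Finite F] [IsAlgClosed k] :
    ¬ FiniteDimensional F k := fun _ =>
  have : Finite k := Module.finite_of_finite F
  not_finite k

theorem not_finiteDimensional_rat_of_isAlgClosed [CharZero k] [IsAlgClosed k] :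
    ¬ FiniteDimensional ℚ k := by
  intro _
  obtain ⟨q, hq, hprime⟩ := Nat.exists_infinite_primes (Module.finrank ℚ k + 2)
  obtain ⟨z, hz⟩ := IsAlgClosed.exists_aeval_eq_zero k (Polynomial.cyclotomic q ℚ)
    (Polynomial.degree_cyclotomic_pos q ℚ hprime.pos).ne'
  have hminpoly := minpoly.eq_of_irreducible_of_monic
    (Polynomial.cyclotomic.irreducible_rat hprime.pos) hz (Polynomial.cyclotomic.monic q ℚ)
  have hdeg := minpoly.natDegree_le (A := ℚ) z
  rw [← hminpoly, Polynomial.natDegree_cyclotomic, Nat.totient_prime hprime] at hdeg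
  omega

theorem exists_ringEquiv_fixing_finite_ne [IsAlgClosed k] {T : Set k} (hT : T.Finite) :
    ∃ σ : k ≃+* k, (∀ t ∈ T, σ t = t) ∧ ∃ a, σ a ≠ a := by
  obtain ⟨p, _⟩ := CharP.exists k
  rcases CharP.char_is_prime_or_zero k p with hp | rfl
  · have := Fact.mk hp
    let := ZMod.algebra k p
    have : IsAlgClosed (algebraicClosure (ZMod p) k) :=
      (algebraicClosure.isAlgClosure _ k).isAlgClosed
    exact exists_ringEquiv_fixing_finite_of_infinite_algebraicClosure
      (not_finiteDimensional_of_isAlgClosed_of_finite (F := ZMod p)) hT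
  · have := CharP.charP_to_charZero k
    have : IsAlgClosed (algebraicClosure ℚ k) := (algebraicClosure.isAlgClosure ℚ k).isAlgClosed
    exact exists_ringEquiv_fixing_finite_of_infinite_algebraicClosure
      not_finiteDimensional_rat_of_isAlgClosed hT

end FieldAutomorphisms

section ValuedExtensions

variable {L K Γ₀ : Type*} [Field L] [Field K] [Algebra L K] [LinearOrderedCommGroupWithZero Γ₀]

theorem exists_ne_valuation_eq_of_sum_eq_zero (v : Valuation K Γ₀) {ι : Type*} {s : Finset ι}
    {a : ι → K} (hsum : ∑ i ∈ s, a i = 0) (ha : ∀ i ∈ s, a i ≠ 0) (hs : s.Nonempty) :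
    ∃ i ∈ s, ∃ j ∈ s, i ≠ j ∧ v (a i) = v (a j) := by
  classical
  obtain ⟨m, hm, hmax⟩ := s.exists_max_image (fun i => v (a i)) hs
  by_contra! hne
  refine ha m hm (v.zero_iff.1 ?_)
  rw [← v.map_sum_eq_of_lt hm, hsum, map_zero]
  intro i hi
  simp only [Finset.mem_sdiff, Finset.mem_singleton] at hi
  exact (hmax i hi.1).lt_of_ne (hne i hi.1 m hm hi.2)

theorem exists_pow_valuation_eq_of_isAlgebraic (v : Valuation K Γ₀) {g : K} (hg : g ≠ 0)
    (halg : IsAlgebraic L g) :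
    ∃ e : ℕ, 0 < e ∧ ∃ l : L, l ≠ 0 ∧ v g ^ e = v (algebraMap L K l) := by
  obtain ⟨q, hq, hroot⟩ := halg
  rw [Polynomial.aeval_def, Polynomial.eval₂_eq_sum, Polynomial.sum] at hroot
  obtain ⟨i, hi, j, hj, hij, heq⟩ := exists_ne_valuation_eq_of_sum_eq_zero v hroot
    (fun i hi => mul_ne_zero (by simpa using hi) (pow_ne_zero i hg)) (by simpa using hq)
  wlog hlt : i < j generalizing i j
  · exact this j hj i hi hij.symm heq.symm (by omega)
  rw [Polynomial.mem_support_iff] at hi hj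
  refine ⟨j - i, by omega, q.coeff i / q.coeff j, div_ne_zero hi hj, ?_⟩
  have hvg : v g ^ i ≠ 0 := pow_ne_zero i ((v.ne_zero_iff).2 hg)
  have hvj : v (algebraMap L K (q.coeff j)) ≠ 0 := (v.ne_zero_iff).2 (by simpa using hj)
  rw [map_mul, map_mul, map_pow, map_pow, ← pow_sub_mul_pow (v g) hlt.le, ← mul_assoc] at heq
  rw [map_div₀, map_div₀, mul_right_cancel₀ hvg heq, mul_div_cancel_left₀ _ hvj]

theorem exists_one_le_valuation_algebraMap_sub [Infinite L] (s : Finset (ValuationSubring K))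
    (hs : ∀ V ∈ s, V.valuation.IsTrivialOn L) (z : K) :
    ∃ c : L, c ≠ 0 ∧ ∀ V ∈ s, 1 ≤ V.valuation (algebraMap L K c - z) := by
  have subsingleton_residue (V : ValuationSubring K) (hV : V ∈ s) :
      {c : L | V.valuation (algebraMap L K c - z) < 1}.Subsingleton := by
    intro c hc c' hc'
    by_contra hne
    have hlt := V.valuation.map_sub_lt hc hc'
    rw [sub_sub_sub_cancel_right, ← map_sub, (hs V hV).eq_one _ (sub_ne_zero.2 hne)] at hlt
    exact hlt.false
  have hfin : ({0} ∪ ⋃ V ∈ s, {c : L | V.valuation (algebraMap L K c - z) < 1}).Finite :=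
    (Set.finite_singleton 0).union
      (s.finite_toSet.biUnion fun V hV => (subsingleton_residue V hV).finite)
  obtain ⟨c, hc⟩ := hfin.exists_notMem
  simp only [Set.mem_union, Set.mem_singleton_iff, Set.mem_iUnion, Set.mem_ofPred_eq, exists_prop,
    not_or, not_exists, not_and, not_lt] at hc
  exact ⟨c, hc⟩

theorem exists_valuation_eq_one_and_lt_one [Infinite L] (s : Finset (ValuationSubring K))
    (hs : ∀ V ∈ s, V.valuation.IsTrivialOn L) {V W : ValuationSubring K} (hV : V ∈ s) (hW : W ∈ s)
    {z : K} (hzV : V.valuation z < 1) (hzW : 1 < W.valuation z) :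
    ∃ w, V.valuation w = 1 ∧ W.valuation w < 1 ∧ ∀ U ∈ s, U.valuation w ≤ 1 := by
  obtain ⟨c, hc, hU⟩ := exists_one_le_valuation_algebraMap_sub s hs z
  have valuation_c (U : ValuationSubring K) (hU : U ∈ s) : U.valuation (algebraMap L K c) = 1 :=
    (hs U hU).eq_one c hc
  refine ⟨algebraMap L K c / (algebraMap L K c - z), ?_, ?_, fun U hUs => ?_⟩
  · rw [map_div₀, V.valuation.map_sub_eq_of_lt_left (by rwa [valuation_c V hV]),
      valuation_c V hV, div_one]
  · rw [map_div₀, W.valuation.map_sub_eq_of_lt_right (by rwa [valuation_c W hW]), valuation_c W hW]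
    exact (div_lt_one₀ (zero_lt_one.trans hzW)).2 hzW
  · rw [map_div₀, valuation_c U hUs]
    exact div_le_one_of_le₀ (hU U hUs) zero_le

theorem exists_valuation_eq_one_and_forall_lt_one [Infinite L] (s : Finset (ValuationSubring K))
    (hs : ∀ V ∈ s, V.valuation.IsTrivialOn L) {V : ValuationSubring K} (hV : V ∈ s)
    (hsep : ∀ W ∈ s, W ≠ V → ∃ z, V.valuation z < 1 ∧ 1 < W.valuation z) :
    ∃ w, V.valuation w = 1 ∧ ∀ W ∈ s, W ≠ V → W.valuation w < 1 := by
  classical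
  choose! z hzV hzW using hsep
  have exists_factor (W : ValuationSubring K) (hW : W ∈ s.erase V) : ∃ w, V.valuation w = 1 ∧
      W.valuation w < 1 ∧ ∀ U ∈ s, U.valuation w ≤ 1 := by
    obtain ⟨hne, hW⟩ := Finset.mem_erase.1 hW
    exact exists_valuation_eq_one_and_lt_one s hs hV hW (hzV W hW hne) (hzW W hW hne)
  choose! w hwV hwW hwU using exists_factor
  refine ⟨∏ W ∈ s.erase V, w W, ?_, fun W hW hne => ?_⟩
  · rw [map_prod, Finset.prod_eq_one hwV]
  · have hWe : W ∈ s.erase V := Finset.mem_erase.2 ⟨hne, hW⟩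
    rw [map_prod, ← Finset.mul_prod_erase _ _ hWe]
    exact mul_lt_one_of_lt_of_le (hwW W hWe)
      (Finset.prod_le_one' fun U hU => hwU U (Finset.mem_of_mem_erase hU) W hW)

end ValuedExtensions

/-- `V` is a place at infinity of `K` relative to the coordinate `x`: a valuation ring of `K / k`
at which `x` has a pole. -/
structure IsPlaceAtInfinity (k : Type*) {K : Type*} [Field k] [Field K] [Algebra k K] (x : K)
    (V : ValuationSubring K) : Prop where
  algebraMap_mem : ∀ c : k, algebraMap k K c ∈ V
  notMem : x ∉ V

namespace IsPlaceAtInfinity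

variable {k K : Type*} [Field k] [Field K] [Algebra k K] {x : K} {V W : ValuationSubring K}

theorem one_lt_valuation (hV : IsPlaceAtInfinity k x V) : 1 < V.valuation x := by
  rw [← not_le, V.valuation_le_one_iff]
  exact hV.notMem

theorem isTrivialOn (hV : IsPlaceAtInfinity k x V) : V.valuation.IsTrivialOn k where
  eq_one c hc := by
    refine le_antisymm ((V.valuation_le_one_iff _).2 (hV.algebraMap_mem c)) ?_
    have hinv := (V.valuation_le_one_iff _).2 (hV.algebraMap_mem c⁻¹)
    rw [map_inv₀, map_inv₀] at hinv
    exact (inv_le_one₀ (zero_lt_iff.2 (V.valuation.ne_zero_iff.2 (by simpa using hc)))).1 hinv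

theorem exists_valuation_eq_zpow_of_mem_adjoin {l : K} (hl : l ∈ IntermediateField.adjoin k {x})
    (h0 : l ≠ 0) : ∃ j : ℤ, ∀ V, IsPlaceAtInfinity k x V → V.valuation l = V.valuation x ^ j := by
  obtain ⟨r, s, rfl⟩ := (IntermediateField.mem_adjoin_simple_iff k l).1 hl
  have hr : r ≠ 0 := by rintro rfl; simp at h0
  have hs : s ≠ 0 := by rintro rfl; simp at h0
  refine ⟨r.natDegree - s.natDegree, fun V hV => ?_⟩
  have := hV.isTrivialOn
  have hx := hV.one_lt_valuation
  have valuation_aeval {q : Polynomial k} (hq : q ≠ 0) :=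
    Polynomial.valuation_aeval_eq_valuation_X_pow_natDegree_of_one_lt_valuation_X x hx hq
  rw [map_div₀, valuation_aeval hr, valuation_aeval hs, zpow_sub₀ (zero_lt_one.trans hx).ne',
    zpow_natCast, zpow_natCast]

theorem exists_pow_valuation_eq_zpow [Algebra.IsAlgebraic (IntermediateField.adjoin k {x}) K]
    (hV : IsPlaceAtInfinity k x V) {g : K} (hg : g ≠ 0) :
    ∃ e : ℕ, 0 < e ∧ ∃ j : ℤ, V.valuation g ^ e = V.valuation x ^ j := by
  obtain ⟨e, he, l, hl, hgl⟩ := exists_pow_valuation_eq_of_isAlgebraic V.valuation hg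
    (Algebra.IsAlgebraic.isAlgebraic (R := IntermediateField.adjoin k {x}) g)
  obtain ⟨j, hj⟩ := exists_valuation_eq_zpow_of_mem_adjoin l.2 (by simpa using hl)
  exact ⟨e, he, j, hgl.trans (hj V hV)⟩

theorem eq_of_le [Algebra.IsAlgebraic (IntermediateField.adjoin k {x}) K]
    (hV : IsPlaceAtInfinity k x V) (hW : IsPlaceAtInfinity k x W) (hle : V ≤ W) : V = W := by
  refine le_antisymm hle fun g hgW => ?_
  by_contra hgV
  rw [← V.valuation_le_one_iff, not_le] at hgV
  obtain ⟨e, he, j, hj⟩ := hV.exists_pow_valuation_eq_zpow (g := g) (by rintro rfl; simp at hgV)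
  have hx := hV.one_lt_valuation
  have hjpos : 0 < j := by
    rw [← zpow_lt_zpow_iff_right₀ hx, zpow_zero, ← hj]
    exact one_lt_pow₀ hgV he.ne'
  have hquot : x ^ j / g ^ e ∈ W := hle <| by
    rw [← V.valuation_le_one_iff, map_div₀, map_zpow₀, map_pow, hj,
      div_self (zpow_pos (zero_lt_one.trans hx) j).ne']
  have hxj : x ^ j ∈ W := by
    rw [← div_mul_cancel₀ (x ^ j) (pow_ne_zero e (show g ≠ 0 by rintro rfl; simp at hgV))]
    exact mul_mem hquot (pow_mem hgW e)
  rw [← W.valuation_le_one_iff, map_zpow₀] at hxj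
  exact hxj.not_gt (one_lt_zpow₀ hW.one_lt_valuation hjpos)

theorem exists_valuation_lt_one_lt [Algebra.IsAlgebraic (IntermediateField.adjoin k {x}) K]
    (hV : IsPlaceAtInfinity k x V) (hW : IsPlaceAtInfinity k x W) (hne : V ≠ W) :
    ∃ z, V.valuation z < 1 ∧ 1 < W.valuation z := by
  obtain ⟨a, haV, haW⟩ := SetLike.not_le_iff_exists.1 fun h => hne (hV.eq_of_le hW h)
  obtain ⟨b, hbW, hbV⟩ := SetLike.not_le_iff_exists.1 fun h => hne (hW.eq_of_le hV h).symm
  rw [← ValuationSubring.valuation_le_one_iff] at haV haW hbW hbV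
  rw [not_le] at haW hbV
  have hb : 0 < W.valuation b :=
    zero_lt_iff.2 (W.valuation.ne_zero_iff.2 (by rintro rfl; simp at hbV))
  refine ⟨a / b, ?_, ?_⟩
  · rw [map_div₀, div_lt_one₀ (zero_lt_one.trans hbV)]
    exact haV.trans_lt hbV
  · rw [map_div₀, one_lt_div₀ hb]
    exact hbW.trans_lt haW

theorem linearIndependent_of_valuation_lt_one {s : Finset (ValuationSubring K)}
    (hs : ∀ V ∈ s, IsPlaceAtInfinity k x V) {w : s → K} (hdiag : ∀ V : s, V.1.valuation (w V) = 1)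
    (hoff : ∀ V W : s, V ≠ W → V.1.valuation (w W) < 1) :
    LinearIndependent (IntermediateField.adjoin k {x}) w := by
  classical
  rw [Fintype.linearIndependent_iff]
  intro l hl
  by_contra! hne
  have exists_order (V : s) (h : l V ≠ 0) : ∃ j : ℤ, ∀ W, IsPlaceAtInfinity k x W →
      W.valuation (l V : K) = W.valuation x ^ j :=
    exists_valuation_eq_zpow_of_mem_adjoin (l V).2 (by simpa using h)
  choose! j hj using exists_order
  obtain ⟨V, hV, hmax⟩ := (Finset.univ.filter fun V => l V ≠ 0).exists_max_image j
    (by obtain ⟨V, hV⟩ := hne; exact ⟨V, by simpa using hV⟩)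
  simp only [Finset.mem_filter, Finset.mem_univ, true_and] at hV hmax
  have hinf := hs V V.2
  have hx := hinf.one_lt_valuation
  have valuation_smul (W : s) : V.1.valuation (l W • w W) =
      V.1.valuation (l W : K) * V.1.valuation (w W) := by rw [← map_mul]; rfl
  have hdom : V.1.valuation (∑ W, l W • w W) = V.1.valuation (l V • w V) := by
    refine V.1.valuation.map_sum_eq_of_lt (Finset.mem_univ V) fun W hW => ?_
    have hWV : W ≠ V := by simpa using hW
    rw [valuation_smul, valuation_smul, hdiag, mul_one, hj V hV _ hinf]
    by_cases h : l W = 0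
    · simpa [h, zero_lt_iff] using zpow_ne_zero (j V) (zero_lt_one.trans hx).ne'
    · rw [hj W h _ hinf]
      calc V.1.valuation x ^ j W * V.1.valuation (w W)
          < V.1.valuation x ^ j W := mul_lt_of_lt_one_right (zpow_pos (zero_lt_one.trans hx) _)
            (hoff V W hWV.symm)
        _ ≤ V.1.valuation x ^ j V := zpow_le_zpow_right₀ hx.le (hmax W h)
  rw [hl, map_zero, valuation_smul, hdiag, mul_one, eq_comm, map_eq_zero] at hdom
  exact hV (by simpa using hdom)

theorem setOf_finite [Infinite k] [FiniteDimensional (IntermediateField.adjoin k {x}) K] :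
    {V : ValuationSubring K | IsPlaceAtInfinity k x V}.Finite := by
  by_contra hinf
  obtain ⟨s, hs, hcard⟩ := Set.Infinite.exists_subset_card_eq hinf
    (Module.finrank (IntermediateField.adjoin k {x}) K + 1)
  have exists_dual (V : s) : ∃ w, V.1.valuation w = 1 ∧ ∀ W ∈ s, W ≠ V → W.valuation w < 1 :=
    exists_valuation_eq_one_and_forall_lt_one (L := k) s (fun W hW => (hs hW).isTrivialOn) V.2
      fun W hW hne => (hs V.2).exists_valuation_lt_one_lt (hs hW) hne.symm
  choose w hdiag hoff using exists_dual
  have hli := linearIndependent_of_valuation_lt_one (k := k) (fun V hV => hs hV) hdiag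
    fun V W hne => hoff W V V.2 fun h => hne (Subtype.ext h)
  have := hli.fintype_card_le_finrank
  simp [hcard] at this

theorem valuation_apply_eq [Algebra.IsAlgebraic (IntermediateField.adjoin k {x}) K]
    (hV : IsPlaceAtInfinity k x V) {ρ : K ≃+* K} (hx : ρ x = x) (hρ : ∀ z, ρ z ∈ V ↔ z ∈ V)
    (g : K) : V.valuation (ρ g) = V.valuation g := by
  rcases eq_or_ne g 0 with rfl | hg
  · simp
  obtain ⟨e, he, j, hj⟩ := hV.exists_pow_valuation_eq_zpow hg
  have hxj : V.valuation x ^ j ≠ 0 := zpow_ne_zero j (zero_lt_one.trans hV.one_lt_valuation).ne'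
  have valuation_le_one_iff (z : K) : V.valuation (ρ z) ≤ 1 ↔ V.valuation z ≤ 1 := by
    rw [V.valuation_le_one_iff, V.valuation_le_one_iff, hρ]
  have map_unit {u : K} (hu : V.valuation u = 1) : V.valuation (ρ u) = 1 := by
    refine le_antisymm ((valuation_le_one_iff u).2 hu.le) ?_
    have hinv := (valuation_le_one_iff u⁻¹).2 (by rw [map_inv₀, hu, inv_one])
    rw [map_inv₀, map_inv₀] at hinv
    refine (inv_le_one₀ (zero_lt_iff.2 ?_)).1 hinv
    exact V.valuation.ne_zero_iff.2 (by simpa using show u ≠ 0 by rintro rfl; simp at hu)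
  have hunit := map_unit (u := g ^ e / x ^ j)
    (by rw [map_div₀, map_zpow₀, map_pow, hj, div_self hxj])
  rw [map_div₀, map_zpow₀, hx, map_div₀, map_zpow₀, div_eq_one_iff_eq hxj, map_pow, map_pow,
    ← hj] at hunit
  exact (pow_left_inj₀ zero_le zero_le he.ne').1 hunit

theorem comap (hV : IsPlaceAtInfinity k x V) {σ : k → k} {ρ : K →+* K}
    (hρ : ∀ c, ρ (algebraMap k K c) = algebraMap k K (σ c)) (hx : ρ x = x) :
    IsPlaceAtInfinity k x (V.comap ρ) where
  algebraMap_mem c := by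
    rw [ValuationSubring.mem_comap, hρ]
    exact hV.algebraMap_mem _
  notMem := by
    rw [ValuationSubring.mem_comap, hx]
    exact hV.notMem

end IsPlaceAtInfinity

section SemilinearAutomorphisms

open MvPolynomial

theorem mapEquiv_eq_self_of_forall_mem_coeffs {ι k : Type*} [CommSemiring k] {σ : k ≃+* k}
    {g : MvPolynomial ι k} (hσ : ∀ c ∈ g.coeffs, σ c = c) : mapEquiv ι σ g = g := by
  ext m
  rw [mapEquiv_apply, coeff_map]
  by_cases h : g.coeff m = 0
  · rw [h, map_zero]
  · exact hσ _ (coeff_mem_coeffs m h)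

theorem exists_semilinear_ringEquiv_of_map_ker_eq {ι k A : Type*} [CommRing k] [CommRing A]
    [Algebra k A] {φ : MvPolynomial ι k →ₐ[k] A} (hφ : Function.Surjective φ) {σ : k ≃+* k}
    (hσ : RingHom.ker φ.toRingHom = (RingHom.ker φ.toRingHom).map (mapEquiv ι σ).toRingHom) :
    ∃ τ : A ≃+* A, (∀ c, τ (algebraMap k A c) = algebraMap k A (σ c)) ∧
      ∀ q, τ (φ q) = φ (mapEquiv ι σ q) := by
  let e := RingHom.quotientKerEquivOfSurjective (f := φ.toRingHom) hφ
  let τ := e.symm.trans ((Ideal.quotientEquiv _ _ (mapEquiv ι σ) hσ).trans e)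
  have τ_apply (q) : τ (φ q) = φ (mapEquiv ι σ q) := by
    have : e.symm (φ q) = Ideal.Quotient.mk _ q := (RingEquiv.symm_apply_eq e).2 rfl
    simp only [τ, RingEquiv.trans_apply, this]
    rfl
  refine ⟨τ, fun c => ?_, τ_apply⟩
  have := τ_apply (C c)
  rw [mapEquiv_apply, map_C, ← algebraMap_eq, AlgHom.commutes, AlgHom.commutes] at this
  exact this

theorem exists_finite_forall_fixing_exists_semilinear_ringEquiv (k : Type*) {A : Type*}
    [CommRing k] [IsNoetherianRing k] [CommRing A] [Algebra k A] [Algebra.FiniteType k A]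
    {S : Set A} (hS : S.Finite) :
    ∃ T : Set k, T.Finite ∧ ∀ σ : k ≃+* k, (∀ t ∈ T, σ t = t) →
      ∃ τ : A ≃+* A, (∀ c, τ (algebraMap k A c) = algebraMap k A (σ c)) ∧ ∀ a ∈ S, τ a = a := by
  obtain ⟨n, φ, hφ⟩ := Algebra.FiniteType.iff_quotient_mvPolynomial''.1
    (inferInstance : Algebra.FiniteType k A)
  obtain ⟨G, hG⟩ := IsNoetherian.noetherian (RingHom.ker φ.toRingHom)
  let P := (G : Set (MvPolynomial (Fin n) k)) ∪ Function.surjInv hφ '' S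
  refine ⟨⋃ g ∈ P, (g.coeffs : Set k), (G.finite_toSet.union (hS.image _)).biUnion
    fun g _ => g.coeffs.finite_toSet, fun σ hσ => ?_⟩
  have fix (g) (hg : g ∈ P) : mapEquiv (Fin n) σ g = g :=
    mapEquiv_eq_self_of_forall_mem_coeffs fun c hc => hσ c (Set.mem_biUnion hg hc)
  obtain ⟨τ, τ_algebraMap, τ_apply⟩ := exists_semilinear_ringEquiv_of_map_ker_eq hφ (σ := σ) (by
    rw [← hG, Ideal.map_span]
    congr 1
    exact (Set.image_id _).symm.trans
      (Set.image_congr fun g hg => (fix g (Or.inl hg)).symm))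
  refine ⟨τ, τ_algebraMap, fun a ha => ?_⟩
  rw [← Function.surjInv_eq hφ a, τ_apply, fix _ (Or.inr ⟨a, ha, rfl⟩)]

theorem exists_finite_separating_of_finite {α β : Type*} [SetLike α β] {P : Set α}
    (hP : P.Finite) :
    ∃ Z : Set β, Z.Finite ∧ ∀ V ∈ P, ∀ W ∈ P, (∀ z ∈ Z, z ∈ V ↔ z ∈ W) → V = W := by
  have exists_separating (V W : α) :
      ∃ Z : Set β, Z.Finite ∧ ((∀ z ∈ Z, z ∈ V ↔ z ∈ W) → V = W) := by
    by_cases h : V = W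
    · exact ⟨∅, Set.finite_empty, fun _ => h⟩
    · obtain ⟨z, hz⟩ := not_forall.1 (mt SetLike.ext h)
      exact ⟨{z}, Set.finite_singleton z, fun hZ => absurd (hZ z rfl) hz⟩
  choose Z Z_finite hZ using exists_separating
  refine ⟨⋃ V ∈ P, ⋃ W ∈ P, Z V W, hP.biUnion fun V _ => hP.biUnion fun W _ => Z_finite V W,
    fun V hV W hW h => hZ V W fun z hz => h z ?_⟩
  exact Set.mem_biUnion hV (Set.mem_biUnion hW hz)

variable {k A K : Type*} [Field k] [CommRing A] [Algebra k A]
  [Algebra.FiniteType k A] [Field K] [Algebra A K] [IsFractionRing A K]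

variable (k A) in
theorem exists_finite_forall_fixing_exists_semilinear_ringEquiv_fractionField {Z : Set K}
    (hZ : Z.Finite) :
    ∃ T : Set k, T.Finite ∧ ∀ σ : k ≃+* k, (∀ t ∈ T, σ t = t) →
      ∃ (τ : A ≃+* A) (ρ : K ≃+* K), (∀ c, τ (algebraMap k A c) = algebraMap k A (σ c)) ∧
        (∀ a, ρ (algebraMap A K a) = algebraMap A K (τ a)) ∧ ∀ z ∈ Z, ρ z = z := by
  choose num den _ num_div_den using IsFractionRing.div_surjective (K := K) A
  obtain ⟨T, hT, extend⟩ := exists_finite_forall_fixing_exists_semilinear_ringEquiv k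
    ((hZ.image num).union (hZ.image den))
  refine ⟨T, hT, fun σ hσ => ?_⟩
  obtain ⟨τ, τ_algebraMap, τ_fix⟩ := extend σ hσ
  let ρ : K ≃+* K := IsFractionRing.ringEquivOfRingEquiv τ
  have ρ_algebraMap (a) : ρ (algebraMap A K a) = algebraMap A K (τ a) :=
    IsFractionRing.ringEquivOfRingEquiv_algebraMap τ a
  refine ⟨τ, ρ, τ_algebraMap, ρ_algebraMap, fun z hz => ?_⟩
  rw [← num_div_den z, map_div₀, ρ_algebraMap, ρ_algebraMap, τ_fix _ (Or.inl ⟨z, hz, rfl⟩),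
    τ_fix _ (Or.inr ⟨z, hz, rfl⟩)]

variable [Algebra k K] [IsScalarTower k A K]

open IntermediateField in
theorem exists_semilinear_ringEquiv_preserving_places_at_infinity [IsAlgClosed k] (x : A)
    [FiniteDimensional k⟮algebraMap A K x⟯ K] :
    ∃ (σ : k ≃+* k) (τ : A ≃+* A), (∃ a, σ a ≠ a) ∧
      (∀ c, τ (algebraMap k A c) = algebraMap k A (σ c)) ∧ τ x = x ∧
      ∀ V, IsPlaceAtInfinity k (algebraMap A K x) V →
        ∀ a, V.valuation (algebraMap A K (τ a)) = V.valuation (algebraMap A K a) := by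
  have : Infinite k := IsAlgClosed.instInfinite
  obtain ⟨Z, hZ, separating⟩ := exists_finite_separating_of_finite (β := K)
    (IsPlaceAtInfinity.setOf_finite (k := k) (x := algebraMap A K x))
  obtain ⟨T, hT, extend⟩ := exists_finite_forall_fixing_exists_semilinear_ringEquiv_fractionField
    k A (hZ.insert (algebraMap A K x))
  obtain ⟨σ, σ_fix, hσ⟩ := exists_ringEquiv_fixing_finite_ne (k := k) hT
  obtain ⟨τ, ρ, τ_algebraMap, ρ_algebraMap, ρ_fix⟩ := extend σ σ_fix
  have ρ_x : ρ (algebraMap A K x) = algebraMap A K x := ρ_fix _ (Set.mem_insert _ _)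
  have τ_x : τ x = x := IsFractionRing.injective A K ((ρ_algebraMap x).symm.trans ρ_x)
  refine ⟨σ, τ, hσ, τ_algebraMap, τ_x, fun V hV a => ?_⟩
  have hcomap : V.comap (ρ : K →+* K) = V := by
    refine separating _ (hV.comap (σ := σ) (fun c => ?_) ρ_x) V hV fun z hz => ?_
    · rw [RingEquiv.coe_toRingHom, IsScalarTower.algebraMap_apply k A K, ρ_algebraMap,
        τ_algebraMap, ← IsScalarTower.algebraMap_apply]
    · rw [ValuationSubring.mem_comap, RingEquiv.coe_toRingHom,
        ρ_fix z (Set.mem_insert_of_mem _ hz)]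
  rw [← ρ_algebraMap]
  exact hV.valuation_apply_eq ρ_x (fun z => (ValuationSubring.mem_comap).symm.trans
    (by rw [hcomap])) _

end SemilinearAutomorphisms

section IntegralityAndValuations

theorem map_mem_valuationSubring_of_isIntegral {R A K : Type*} [CommRing R] [CommRing A]
    [Algebra R A] [Field K] (φ : A →+* K) (V : ValuationSubring K)
    (hR : ∀ r : R, φ (algebraMap R A r) ∈ V) {a : A} (ha : IsIntegral R a) : φ a ∈ V := by
  obtain ⟨p, hp, hpa⟩ := ha
  let ι : R →+* V := (φ.comp (algebraMap R A)).codRestrict V hR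
  have hι : (algebraMap V K).comp ι = φ.comp (algebraMap R A) := rfl
  have hφa : IsIntegral V (φ a) :=
    ⟨p.map ι, hp.map ι, by rw [Polynomial.eval₂_map, hι, ← Polynomial.hom_eval₂, hpa, map_zero]⟩
  obtain ⟨y, hy⟩ := IsIntegrallyClosed.isIntegral_iff.1 hφa
  exact hy ▸ y.2

theorem isIntegral_of_forall_mem_valuationSubring {K : Type*} [Field K] {R : Subring K} {z : K}
    (hz : ∀ V : ValuationSubring K, R ≤ V.toSubring → z ∈ V) : IsIntegral R z := by
  suffices z ∈ (integralClosure (Subring.closure (R : Set K)) K).toSubring by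
    rwa [Subring.closure_eq] at this
  rw [← iInf_valuationSubring_superset, Subring.mem_iInf]
  exact fun V => hz V.1 V.2

end IntegralityAndValuations

section RegularAtZero

open Polynomial

/-- The local ring `k[f]_(f)` of rational functions in `f` without a pole at `f = 0`, as a
subalgebra of `K`. The denominator is cleared so that no division occurs in the definition. -/
def regularAtZero (k : Type*) {K : Type*} [Field k] [Field K] [Algebra k K] (f : K) :
    Subalgebra k K where
  carrier := {z | ∃ g h : k[X], h.eval 0 ≠ 0 ∧ z * aeval f h = aeval f g}
  mul_mem' := by
    rintro a b ⟨g, h, h0, hg⟩ ⟨g', h', h0', hg'⟩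
    refine ⟨g * g', h * h', by simp [h0, h0'], ?_⟩
    rw [map_mul, map_mul, ← hg, ← hg']
    ring
  add_mem' := by
    rintro a b ⟨g, h, h0, hg⟩ ⟨g', h', h0', hg'⟩
    refine ⟨g * h' + g' * h, h * h', by simp [h0, h0'], ?_⟩
    rw [map_mul, map_add, map_mul, map_mul, ← hg, ← hg']
    ring
  algebraMap_mem' c := ⟨C c, 1, by simp, by simp⟩

namespace regularAtZero

variable {k K : Type*} [Field k] [Field K] [Algebra k K] {f : K}

theorem aeval_mem (g : k[X]) : aeval f g ∈ regularAtZero k f := ⟨g, 1, by simp, by simp⟩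

theorem self_mem : f ∈ regularAtZero k f := by simpa using aeval_mem (f := f) (X : k[X])

theorem aeval_ne_zero (hf : Transcendental k f) {h : k[X]} (h0 : h.eval 0 ≠ 0) :
    aeval f h ≠ 0 := by
  intro hh
  rw [transcendental_iff.1 hf h hh, eval_zero] at h0
  exact h0 rfl

theorem inv_aeval_mem (hf : Transcendental k f) {h : k[X]} (h0 : h.eval 0 ≠ 0) :
    (aeval f h)⁻¹ ∈ regularAtZero k f :=
  ⟨1, h, h0, by rw [map_one, inv_mul_cancel₀ (aeval_ne_zero hf h0)]⟩

theorem self_mem_jacobson (hf : Transcendental k f) :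
    (⟨f, self_mem⟩ : regularAtZero k f) ∈ (⊥ : Ideal (regularAtZero k f)).jacobson := by
  rw [Ideal.mem_jacobson_bot]
  rintro ⟨z, g, h, h0, hz⟩
  have h0' : (h + X * g).eval 0 ≠ 0 := by simpa using h0
  refine IsUnit.of_mul_eq_one ⟨aeval f h * (aeval f (h + X * g))⁻¹,
    mul_mem (aeval_mem h) (inv_aeval_mem hf h0')⟩ (Subtype.ext ?_)
  change (f * z + 1) * (aeval f h * (aeval f (h + X * g))⁻¹) = 1
  rw [← mul_assoc, ← div_eq_mul_inv, div_eq_one_iff_eq (aeval_ne_zero hf h0')]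
  simp only [map_add, map_mul, aeval_X, ← hz]
  ring

theorem mem_adjoin (hf : Transcendental k f) {z : K} (hz : z ∈ regularAtZero k f) :
    z ∈ IntermediateField.adjoin k {f} := by
  obtain ⟨g, h, h0, hg⟩ := hz
  rw [IntermediateField.mem_adjoin_simple_iff]
  exact ⟨g, h, eq_div_of_mul_eq (aeval_ne_zero hf h0) hg⟩

theorem mem_of_mem_adjoin (hf : Transcendental k f) {V : ValuationSubring K}
    (hV : ∀ z ∈ regularAtZero k f, z ∈ V) (hf_inv : f⁻¹ ∈ V) {z : K}
    (hz : z ∈ IntermediateField.adjoin k {f}) : z ∈ V := by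
  obtain ⟨r, s, rfl⟩ := (IntermediateField.mem_adjoin_simple_iff k z).1 hz
  rw [div_eq_mul_inv]
  refine mul_mem (hV _ (aeval_mem r)) ?_
  rcases eq_or_ne s 0 with rfl | hs
  · simp
  obtain ⟨q, hq, hdvd⟩ := exists_eq_pow_rootMultiplicity_mul_and_not_dvd s hs 0
  rw [dvd_iff_isRoot] at hdvd
  rw [hq, map_mul, mul_inv, map_pow, ← inv_pow]
  exact mul_mem (pow_mem (by simpa using hf_inv) _) (hV _ (inv_aeval_mem hf hdvd))

-- A valuation ring containing `k[f]_(f)` also contains `x`: otherwise it is a place at infinity,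
-- so it contains `f⁻¹`, hence the field `k(f)`, over which `x` is algebraic.
theorem isIntegral_algebraMap {A : Type*} [CommRing A] [Algebra k A] [Algebra A K]
    [IsScalarTower k A K] {x : A} [Algebra.IsIntegral (Algebra.adjoin k {x}) A]
    (hf : Transcendental k f) [Algebra.IsAlgebraic (IntermediateField.adjoin k {f}) K]
    (hf_inv : ∀ V, IsPlaceAtInfinity k (algebraMap A K x) V → f⁻¹ ∈ V) (a : A) :
    IsIntegral (regularAtZero k f) (algebraMap A K a) := by
  refine isIntegral_of_forall_mem_valuationSubring (R := (regularAtZero k f).toSubring)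
    fun V hV => ?_
  have hk (c : k) : algebraMap k K c ∈ V := hV ((regularAtZero k f).algebraMap_mem c)
  have hx : algebraMap A K x ∈ V := by
    by_contra hx
    exact hx (map_mem_valuationSubring_of_isIntegral (RingHom.id K) V
      (fun z : IntermediateField.adjoin k {f} =>
        mem_of_mem_adjoin hf (fun _ h => hV h) (hf_inv V ⟨hk, hx⟩) z.2)
      (Algebra.IsAlgebraic.isAlgebraic _).isIntegral)
  refine map_mem_valuationSubring_of_isIntegral (algebraMap A K) V
    (R := Algebra.adjoin k {x}) (fun ⟨y, hy⟩ => ?_) (Algebra.IsIntegral.isIntegral a)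
  obtain ⟨q, rfl⟩ := Algebra.adjoin_mem_exists_aeval k x hy
  change algebraMap A K (aeval x q) ∈ V
  rw [← aeval_algebraMap_apply, aeval_eq_sum_range]
  simp only [Algebra.smul_def]
  exact sum_mem fun i _ => mul_mem (hk _) (pow_mem hx i)

end regularAtZero

end RegularAtZero

section DegreeOneCriterion

theorem exists_eq_algebraMap_add_smul_of_mem_adjoin {D E : Type*} [CommRing D] [CommRing E]
    [Algebra D E] {π : D} {S : Set E}
    (hS : ∀ s ∈ S, ∃ d, ∃ m ∈ Algebra.adjoin D S, s = algebraMap D E d + π • m) {z : E}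
    (hz : z ∈ Algebra.adjoin D S) :
    ∃ d, ∃ m ∈ Algebra.adjoin D S, z = algebraMap D E d + π • m := by
  induction hz using Algebra.adjoin_induction with
  | mem s hs => exact hS s hs
  | algebraMap d => exact ⟨d, 0, zero_mem _, by simp⟩
  | add a b _ _ iha ihb =>
    obtain ⟨d, m, hm, rfl⟩ := iha
    obtain ⟨d', m', hm', rfl⟩ := ihb
    exact ⟨d + d', m + m', add_mem hm hm', by rw [map_add, smul_add]; ring⟩
  | mul a b _ hb iha ihb =>
    obtain ⟨d, m, hm, rfl⟩ := iha
    obtain ⟨d', m', hm', rfl⟩ := ihb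
    refine ⟨d * d', d • m' + m * (algebraMap D E d' + π • m'),
      add_mem (Subalgebra.smul_mem _ hm' d) (mul_mem hm hb), ?_⟩
    simp only [Algebra.smul_def, map_mul]
    ring

theorem adjoin_eq_bot_of_forall_eq_algebraMap_add_smul {D E : Type*} [CommRing D] [CommRing E]
    [Algebra D E] {π : D} (hπ : π ∈ (⊥ : Ideal D).jacobson) {S : Set E} (hfin : S.Finite)
    (h_int : ∀ s ∈ S, IsIntegral D s)
    (hS : ∀ s ∈ S, ∃ d, ∃ m ∈ Algebra.adjoin D S, s = algebraMap D E d + π • m) :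
    Algebra.adjoin D S = ⊥ := by
  rw [eq_bot_iff, ← Subalgebra.toSubmodule.le_iff_le]
  refine Submodule.le_of_le_smul_of_le_jacobson_bot (I := Ideal.span {π})
    (fg_adjoin_of_finite hfin h_int) ((Ideal.span_singleton_le_iff_mem _).2 hπ) fun z hz => ?_
  obtain ⟨d, m, hm, rfl⟩ := exists_eq_algebraMap_add_smul_of_mem_adjoin hS hz
  exact Submodule.add_mem_sup ((⊥ : Subalgebra D E).algebraMap_mem d)
    (Submodule.smul_mem_smul (Ideal.mem_span_singleton_self π) hm)

theorem algebraMap_mem_adjoin_image {k A K : Type*} (D : Type*) [CommRing k] [CommRing A]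
    [CommRing D] [CommRing K] [Algebra k A] [Algebra k D] [Algebra k K] [Algebra A K] [Algebra D K]
    [IsScalarTower k A K] [IsScalarTower k D K] {s : Set A} (hs : Algebra.adjoin k s = ⊤) (a : A) :
    algebraMap A K a ∈ Algebra.adjoin D (algebraMap A K '' s) := by
  have hle : Algebra.adjoin k (algebraMap A K '' s) ≤
      (Algebra.adjoin D (algebraMap A K '' s)).restrictScalars k :=
    Algebra.adjoin_le Algebra.subset_adjoin
  refine hle ((AlgHom.map_adjoin (IsScalarTower.toAlgHom k A K) s).le ⟨a, ?_, rfl⟩)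
  exact hs.ge Algebra.mem_top

variable {k : Type*} [Field k] [IsAlgClosed k]

theorem mem_range_algebraMap_of_isAlgebraic {K : Type*} [CommRing K] [IsDomain K] [Algebra k K]
    {z : K} (hz : IsAlgebraic k z) : z ∈ (algebraMap k K).range := by
  rw [← minpoly.degree_eq_one_iff]
  exact IsAlgClosed.degree_eq_one_of_irreducible k (minpoly.irreducible hz.isIntegral)

variable {A : Type*} [CommRing A] [Algebra k A]

theorem exists_sub_algebraMap_mem_of_isMaximal [Algebra.FiniteType k A] (Q : Ideal A)
    [Q.IsMaximal] (a : A) : ∃ c : k, a - algebraMap k A c ∈ Q := by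
  let := Ideal.Quotient.field Q
  have : Module.Finite k (A ⧸ Q) := finite_of_finite_type_of_isJacobsonRing k (A ⧸ Q)
  obtain ⟨c, hc⟩ := (IsAlgClosed.algebraMap_bijective_of_isIntegral (k := k) (K := A ⧸ Q)).2
    (Ideal.Quotient.mk Q a)
  exact ⟨c, Ideal.Quotient.eq.1 hc.symm⟩

variable {K : Type*} [Field K] [Algebra A K] [IsFractionRing A K] [Algebra k K]
  [IsScalarTower k A K]

-- Nakayama over `D = k[f]_(f)`: each generator of `A` is a constant plus a multiple of
-- `q = f * p`, so `A ⊆ D`.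
theorem adjoin_eq_top_of_isMaximal_span [Algebra.FiniteType k A] {p q : A}
    (hq : (Ideal.span {q}).IsMaximal) {f : K} (hf : Transcendental k f)
    (hfp : f * algebraMap A K p = algebraMap A K q)
    (h_int : ∀ a : A, IsIntegral (regularAtZero k f) (algebraMap A K a)) :
    IntermediateField.adjoin k {f} = ⊤ := by
  obtain ⟨s, hs⟩ := (Algebra.FiniteType.out : (⊤ : Subalgebra k A).FG)
  let D := regularAtZero k f
  let S := algebraMap A K '' s
  have algebraMap_mem (a : A) : algebraMap A K a ∈ Algebra.adjoin D S :=
    algebraMap_mem_adjoin_image D hs a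
  have adjoin_eq_bot : Algebra.adjoin D S = ⊥ := by
    refine adjoin_eq_bot_of_forall_eq_algebraMap_add_smul (regularAtZero.self_mem_jacobson hf)
      (s.finite_toSet.image _) ?_ ?_
    · rintro _ ⟨a, _, rfl⟩
      exact h_int a
    · rintro _ ⟨a, _, rfl⟩
      obtain ⟨c, hc⟩ := exists_sub_algebraMap_mem_of_isMaximal (k := k) (Ideal.span {q}) a
      obtain ⟨b, hb⟩ := Ideal.mem_span_singleton.1 hc
      refine ⟨algebraMap k D c, algebraMap A K (p * b), algebraMap_mem _, ?_⟩
      rw [Algebra.smul_def, ← IsScalarTower.algebraMap_apply, map_mul, ← mul_assoc]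
      change _ = _ + f * _ * _
      rw [hfp, ← map_mul, ← hb, map_sub, ← IsScalarTower.algebraMap_apply, add_sub_cancel]
  have mem_adjoin (a : A) : algebraMap A K a ∈ IntermediateField.adjoin k {f} := by
    obtain ⟨d, hd⟩ := Algebra.mem_bot.1 (adjoin_eq_bot ▸ algebraMap_mem a)
    exact hd ▸ regularAtZero.mem_adjoin hf d.2
  refine eq_top_iff.2 fun z _ => ?_
  obtain ⟨a, b, _, rfl⟩ := IsFractionRing.div_surjective A z
  exact div_mem (mem_adjoin a) (mem_adjoin b)

end DegreeOneCriterion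

section Dimension

theorem trdeg_eq_natCast_iff_of_isFractionRing (k A K : Type*) [Field k] [CommRing A]
    [Algebra k A] [Field K] [Algebra A K] [IsFractionRing A K] [Algebra k K] [IsScalarTower k A K]
    {n : ℕ} : Algebra.trdeg k A = n ↔ Algebra.trdeg k K = n := by
  have : IsDomain A := (IsFractionRing.injective A K).isDomain
  have : Algebra.IsAlgebraic A K := IsLocalization.isAlgebraic K (nonZeroDivisors A)
  have hadd := lift_trdeg_add_eq k A K
  rw [trdeg_eq_zero_iff.2 this, Cardinal.lift_zero, add_zero] at hadd
  rw [← Cardinal.lift_eq_nat_iff, hadd, Cardinal.lift_eq_nat_iff]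

theorem ringKrullDim_eq_of_isIntegral (R S : Type*) [CommRing R] [CommRing S] [IsDomain S]
    [Algebra R S] [Algebra.IsIntegral R S] [FaithfulSMul R S] :
    ringKrullDim S = ringKrullDim R := by
  refine le_antisymm ?_ (iSup_le fun l => ?_)
  · exact Order.krullDim_le_of_strictMono (PrimeSpectrum.comap (algebraMap R S))
      fun P _ hPQ => Ideal.IsIntegral.comap_lt_comap (I := P.asIdeal) hPQ
  · have : IsDomain R := (FaithfulSMul.algebraMap_injective R S).isDomain
    obtain ⟨P, _, hP⟩ := Ideal.exists_ideal_over_prime_of_isIntegral_of_isDomain (S := S)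
      (RelSeries.head l).asIdeal
      (((RingHom.injective_iff_ker_eq_bot _).1 (FaithfulSMul.algebraMap_injective R S)).trans_le
        bot_le)
    have : P.LiesOver (RelSeries.head l).asIdeal := ⟨hP.symm⟩
    obtain ⟨L, hL, _⟩ := Ideal.exists_ltSeries_of_hasGoingUp l P
    exact hL ▸ Order.LTSeries.length_le_krullDim L

variable (k A : Type*) [Field k] [CommRing A] [Algebra k A]

theorem exists_algebraicIndependent_isIntegral_adjoin [Nontrivial A] [Algebra.FiniteType k A] :
    ∃ (n : ℕ) (x : Fin n → A), AlgebraicIndependent k x ∧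
      Algebra.IsIntegral (Algebra.adjoin k (Set.range x)) A := by
  obtain ⟨n, g, hg, h_int⟩ := exists_integral_inj_algHom_of_fg k A
  have aeval_eq : MvPolynomial.aeval (fun i => g (MvPolynomial.X i)) = g :=
    MvPolynomial.algHom_ext fun i => by rw [MvPolynomial.aeval_X]
  refine ⟨n, fun i => g (MvPolynomial.X i), ?_, ?_⟩
  · rwa [AlgebraicIndependent, aeval_eq]
  · rw [Algebra.adjoin_range_eq_range_aeval, aeval_eq]
    refine ⟨fun z => ?_⟩
    obtain ⟨q, hq, hqz⟩ := h_int z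
    exact ⟨q.map g.rangeRestrict.toRingHom, hq.map _, by rwa [Polynomial.eval₂_map]⟩

variable [IsDomain A] [Algebra.FiniteType k A]

theorem trdeg_eq_of_ringKrullDim_eq {d : ℕ} (hd : ringKrullDim A = d) : Algebra.trdeg k A = d := by
  obtain ⟨n, x, hx, _⟩ := exists_algebraicIndependent_isIntegral_adjoin k A
  have hdim : ringKrullDim A = n := by
    rw [ringKrullDim_eq_of_isIntegral (Algebra.adjoin k (Set.range x)) A,
      ← ringKrullDim_eq_of_ringEquiv hx.aevalEquiv.toRingEquiv,
      MvPolynomial.ringKrullDim_of_isNoetherianRing]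
    simp
  have hbasis : IsTranscendenceBasis k x := hx.isTranscendenceBasis_iff_isAlgebraic.2 inferInstance
  have hcard := hbasis.lift_cardinalMk_eq_trdeg
  obtain rfl : n = d := by exact_mod_cast hdim.symm.trans hd
  simpa using hcard.symm

variable {A}

theorem exists_transcendental_isIntegral_adjoin (htr : Algebra.trdeg k A = 1) :
    ∃ x : A, Transcendental k x ∧ Algebra.IsIntegral (Algebra.adjoin k {x}) A := by
  obtain ⟨n, x, hx, h_int⟩ := exists_algebraicIndependent_isIntegral_adjoin k A
  have hbasis : IsTranscendenceBasis k x := hx.isTranscendenceBasis_iff_isAlgebraic.2 inferInstance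
  obtain rfl : n = 1 := by
    have := hbasis.lift_cardinalMk_eq_trdeg
    rw [htr] at this
    simpa using this
  exact ⟨x 0, hx.transcendental 0, by rwa [Set.range_unique] at h_int⟩

theorem isPrincipalIdealRing_of_trdeg_eq_one [UniqueFactorizationMonoid A]
    (htr : Algebra.trdeg k A = 1) : IsPrincipalIdealRing A := by
  obtain ⟨x, hx, _⟩ := exists_transcendental_isIntegral_adjoin k htr
  have : Ring.DimensionLEOne (Algebra.adjoin k {x}) :=
    .of_ringEquiv (Polynomial.algEquivOfTranscendental k x hx).symm.toRingEquiv
  have : Ring.DimensionLEOne A := .of_isIntegral (Algebra.adjoin k {x}) A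
  have := Algebra.FiniteType.isNoetherianRing k A
  have : IsDedekindDomain A := { }
  exact .of_isDedekindDomain_of_uniqueFactorizationMonoid A

end Dimension

section CurveGenerator

open IntermediateField

variable {k K : Type*} [Field k] [Field K] [Algebra k K]

theorem finiteDimensional_adjoin_simple_of_trdeg_le_one [Algebra.EssFiniteType k K]
    (htr : Algebra.trdeg k K ≤ 1) {y : K} (hy : Transcendental k y) :
    FiniteDimensional k⟮y⟯ K := by
  have hbasis : IsTranscendenceBasis k fun _ : Unit => y :=
    (algebraicIndependent_unique_type_iff.2 hy).isTranscendenceBasis_of_lift_trdeg_le_of_finite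
      (by simpa using htr)
  have := hbasis.isAlgebraic_field
  rw [Set.range_const] at this
  have : Algebra.EssFiniteType k⟮y⟯ K := .of_comp k k⟮y⟯ K
  exact Algebra.finite_of_essFiniteType_of_isAlgebraic

variable {A : Type*} [CommRing A] [Algebra k A]

theorem not_isUnit_sub_algebraMap_of_isIntegral_adjoin {x : A}
    (hx : Transcendental k x) [Algebra.IsIntegral (Algebra.adjoin k {x}) A] (a : k) :
    ¬ IsUnit (x - algebraMap k A a) := by
  intro hu
  have := Algebra.IsIntegral.isLocalHom (Algebra.adjoin k {x}) A
  let x' : Algebra.adjoin k {x} := ⟨x, Algebra.self_mem_adjoin_singleton k x⟩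
  have hu' : IsUnit (x' - algebraMap k _ a) := isUnit_of_map_unit (algebraMap _ A) _ hu
  obtain ⟨⟨b, hb⟩, hmul⟩ := hu'.exists_right_inv
  obtain ⟨q, rfl⟩ := Algebra.adjoin_mem_exists_aeval k x hb
  have h := transcendental_iff.1 hx ((Polynomial.X - Polynomial.C a) * q - 1) (by
    simpa [sub_eq_zero] using congrArg Subtype.val hmul)
  simpa using congrArg (Polynomial.eval a) h

theorem not_dvd_apply_of_dvd_sub_algebraMap {p x : A} (hp : ¬ IsUnit p) {σ : k ≃+* k}
    {τ : A ≃+* A} (hτ : ∀ c, τ (algebraMap k A c) = algebraMap k A (σ c)) (hx : τ x = x) {a : k}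
    (ha : σ a ≠ a) (hdvd : p ∣ x - algebraMap k A a) : ¬ p ∣ τ p := by
  intro h
  have h' : p ∣ x - algebraMap k A (σ a) := by
    simpa only [map_sub, hτ, hx] using h.trans (map_dvd τ hdvd)
  have hsub := dvd_sub hdvd h'
  rw [sub_sub_sub_cancel_left, ← map_sub] at hsub
  exact hp (isUnit_of_dvd_unit hsub ((IsUnit.mk0 _ (sub_ne_zero.2 ha)).map _))

theorem essFiniteType_of_isFractionRing (k A K : Type*) [Field k] [CommRing A] [Algebra k A]
    [Algebra.FiniteType k A] [Field K] [Algebra A K] [IsFractionRing A K] [Algebra k K]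
    [IsScalarTower k A K] : Algebra.EssFiniteType k K :=
  have : Algebra.EssFiniteType A K := .of_isLocalization K (nonZeroDivisors A)
  .comp k A K

variable [Algebra.FiniteType k A] [Algebra A K] [IsFractionRing A K] [IsScalarTower k A K]

-- The valuations of `τ p / p` at the places at infinity are trivial, so its zero divisor is the
-- single point `τ p = 0`, with multiplicity one.
theorem adjoin_apply_div_self_eq_top [IsAlgClosed k] (htr : Algebra.trdeg k K ≤ 1) {p x : A}
    [Algebra.IsIntegral (Algebra.adjoin k {x}) A] {τ : A ≃+* A} (hp0 : algebraMap A K p ≠ 0)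
    (hp : (Ideal.span {p}).IsMaximal) (hdvd : ¬ p ∣ τ p)
    (hτ : ∀ V, IsPlaceAtInfinity k (algebraMap A K x) V →
      V.valuation (algebraMap A K (τ p)) = V.valuation (algebraMap A K p)) :
    k⟮algebraMap A K (τ p) / algebraMap A K p⟯ = ⊤ := by
  have := essFiniteType_of_isFractionRing k A K
  set f := algebraMap A K (τ p) / algebraMap A K p
  have hfp : f * algebraMap A K p = algebraMap A K (τ p) := div_mul_cancel₀ _ hp0
  have hf : Transcendental k f := by
    intro halg
    obtain ⟨c, hc⟩ := mem_range_algebraMap_of_isAlgebraic halg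
    refine hdvd ⟨algebraMap k A c, IsFractionRing.injective A K ?_⟩
    rw [map_mul, ← IsScalarTower.algebraMap_apply, hc, mul_comm, hfp]
  have := finiteDimensional_adjoin_simple_of_trdeg_le_one htr hf
  have hτp : (Ideal.span {τ p}).IsMaximal := by
    have := Ideal.map_isMaximal_of_equiv (p := Ideal.span {p}) τ
    rwa [Ideal.map_span, Set.image_singleton] at this
  refine adjoin_eq_top_of_isMaximal_span hτp hf hfp
    (regularAtZero.isIntegral_algebraMap (x := x) hf fun V hV => ?_)
  rw [← V.valuation_le_one_iff, map_inv₀, map_div₀, hτ V hV,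
    div_self (V.valuation.ne_zero_iff.2 hp0), inv_one]

variable (K) in
theorem exists_adjoin_simple_eq_top_of_isPrincipalIdealRing [IsAlgClosed k] [IsDomain A]
    [IsPrincipalIdealRing A] (htr : Algebra.trdeg k A = 1) : ∃ f : K, k⟮f⟯ = ⊤ := by
  obtain ⟨x, hx, _⟩ := exists_transcendental_isIntegral_adjoin k htr
  have htrK : Algebra.trdeg k K = 1 := by
    rw [← Nat.cast_one, ← trdeg_eq_natCast_iff_of_isFractionRing k A K, htr, Nat.cast_one]
  have := essFiniteType_of_isFractionRing k A K
  have := finiteDimensional_adjoin_simple_of_trdeg_le_one htrK.le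
    ((transcendental_algebraMap_iff (IsFractionRing.injective A K)).2 hx)
  obtain ⟨σ, τ, ⟨a, ha⟩, τ_algebraMap, τ_x, τ_valuation⟩ :=
    exists_semilinear_ringEquiv_preserving_places_at_infinity (k := k) (K := K) x
  obtain ⟨P, hP, hxP⟩ := exists_max_ideal_of_mem_nonunits
    (not_isUnit_sub_algebraMap_of_isIntegral_adjoin hx a)
  obtain ⟨p, rfl⟩ := IsPrincipalIdealRing.principal P
  rw [Ideal.submodule_span_eq, Ideal.mem_span_singleton] at hxP
  have hp0 : algebraMap A K p ≠ 0 := by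
    rw [Ne, FaithfulSMul.algebraMap_eq_zero_iff]
    rintro rfl
    rw [zero_dvd_iff, sub_eq_zero] at hxP
    exact hx (hxP ▸ isAlgebraic_algebraMap a)
  refine ⟨_, adjoin_apply_div_self_eq_top htrK.le (x := x) hp0 hP ?_ fun V hV => τ_valuation V hV p⟩
  exact not_dvd_apply_of_dvd_sub_algebraMap
    (Ideal.span_singleton_eq_top.not.1 hP.ne_top) τ_algebraMap τ_x ha hxP

end CurveGenerator

section HomogeneousFactors

open DirectSum SetLike

variable {ι k R : Type*} [AddCommGroup ι] [DecidableEq ι] [CommSemiring k] [CommRing R]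
  [Algebra k R] {𝒜 : ι → Submodule k R} [GradedAlgebra 𝒜]

open scoped Classical in
theorem coe_decompose_mul_add_of_uniqueAdd {a b : R} {i j : ι}
    (h : UniqueAdd (decompose 𝒜 a).support (decompose 𝒜 b).support i j) :
    (decompose 𝒜 (a * b) (i + j) : R) = decompose 𝒜 a i * decompose 𝒜 b j := by
  rw [decompose_mul, coe_mul_apply]
  refine Finset.sum_eq_single (i, j) ?_ ?_
  · rintro ⟨i', j'⟩ hmem hne
    rw [Finset.mem_filter, Finset.mem_product] at hmem
    obtain ⟨rfl, rfl⟩ := h hmem.1.1 hmem.1.2 hmem.2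
    exact absurd rfl hne
  · simp only [Finset.mem_filter, Finset.mem_product, and_true, not_and_or,
      DFinsupp.notMem_support_iff]
    rintro (h0 | h0) <;> simp [h0]

theorem val_inv_mem_of_val_mem {w : Rˣ} {g : ι} (hw : (w : R) ∈ 𝒜 g) :
    ((w⁻¹ : Rˣ) : R) ∈ 𝒜 (-g) := by
  have hmul : (w : R) * decompose 𝒜 ((w⁻¹ : Rˣ) : R) (-g) = 1 := by
    rw [← coe_decompose_mul_add_of_left_mem 𝒜 hw, Units.mul_inv, add_neg_cancel,
      decompose_of_mem_same 𝒜 (GradedOne.one_mem : (1 : R) ∈ 𝒜 0)]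
  rw [Units.inv_eq_of_mul_eq_one_right hmul]
  exact coe_mem _

variable [NoZeroDivisors R] [TwoUniqueSums ι]

open scoped Classical in
theorem card_support_decompose_mul_card_support_decompose_le_one {a b : R}
    (hab : IsHomogeneousElem 𝒜 (a * b)) :
    (decompose 𝒜 a).support.card * (decompose 𝒜 b).support.card ≤ 1 := by
  obtain ⟨g, hg⟩ := hab
  have add_eq_of_uniqueAdd : ∀ p ∈ (decompose 𝒜 a).support ×ˢ (decompose 𝒜 b).support,
      UniqueAdd (decompose 𝒜 a).support (decompose 𝒜 b).support p.1 p.2 → p.1 + p.2 = g := by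
    intro p hp hu
    by_contra hne
    have hmul := coe_decompose_mul_add_of_uniqueAdd hu
    rw [decompose_of_mem_ne 𝒜 hg (Ne.symm hne), eq_comm, mul_eq_zero, ZeroMemClass.coe_eq_zero,
      ZeroMemClass.coe_eq_zero] at hmul
    rw [Finset.mem_product, DFinsupp.mem_support_iff, DFinsupp.mem_support_iff] at hp
    exact hmul.elim hp.1 hp.2
  by_contra! hlt
  obtain ⟨p, hp, q, hq, hne, hup, huq⟩ := TwoUniqueSums.uniqueAdd_of_one_lt_card hlt
  obtain ⟨h₁, h₂⟩ := hup (Finset.mem_product.1 hq).1 (Finset.mem_product.1 hq).2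
    ((add_eq_of_uniqueAdd q hq huq).trans (add_eq_of_uniqueAdd p hp hup).symm)
  exact hne (Prod.ext h₁.symm h₂.symm)

theorem isHomogeneousElem_left_of_mul {a b : R} (hab : IsHomogeneousElem 𝒜 (a * b))
    (hb : b ≠ 0) : IsHomogeneousElem 𝒜 a := by
  classical
  have hpos : 0 < (decompose 𝒜 b).support.card := by
    rw [Finset.card_pos, Finset.nonempty_iff_ne_empty, Ne, DFinsupp.support_eq_empty]
    exact fun h => hb ((decompose 𝒜).injective (h.trans (decompose_zero 𝒜).symm))
  have hcard : (decompose 𝒜 a).support.card ≤ 1 :=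
    (Nat.le_mul_of_pos_right _ hpos).trans
      (card_support_decompose_mul_card_support_decompose_le_one hab)
  obtain ⟨i, hi⟩ := Finset.card_le_one_iff_subset_singleton.1 hcard
  refine ⟨i, ?_⟩
  rw [← sum_support_decompose 𝒜 a]
  refine sum_mem fun j hj => ?_
  rw [Finset.mem_singleton.1 (hi hj)]
  exact coe_mem _

theorem isHomogeneousElem_right_of_mul {a b : R} (hab : IsHomogeneousElem 𝒜 (a * b))
    (ha : a ≠ 0) : IsHomogeneousElem 𝒜 b :=
  isHomogeneousElem_left_of_mul (mul_comm a b ▸ hab) ha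

end HomogeneousFactors

section GradedLift

open DirectSum SetLike

variable {ι k R C : Type*} [AddMonoid ι] [DecidableEq ι] [CommSemiring k] [Semiring R] [Algebra k R]
  [Semiring C] [Algebra k C] (𝒜 : ι → Submodule k R) [GradedAlgebra 𝒜] (f : ∀ i, 𝒜 i →ₗ[k] C)
  (hone : f 0 ⟨1, GradedOne.one_mem⟩ = 1)
  (hmul : ∀ i j (a : 𝒜 i) (b : 𝒜 j), f (i + j) ⟨a * b, GradedMul.mul_mem a.2 b.2⟩ = f i a * f j b)

/-- The algebra homomorphism out of a graded algebra given by a multiplicative family of linear maps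
on the homogeneous components. -/
def gradedLift : R →ₐ[k] C :=
  (toAlgebra k (fun i => 𝒜 i) f hone fun {i j} => hmul i j).comp (decomposeAlgEquiv 𝒜).toAlgHom

theorem gradedLift_of_mem {a : R} {i : ι} (ha : a ∈ 𝒜 i) :
    gradedLift 𝒜 f hone hmul a = f i ⟨a, ha⟩ := by
  have decompose_eq : (decomposeAlgEquiv 𝒜).toAlgHom a = of (fun i => 𝒜 i) i ⟨a, ha⟩ :=
    decompose_of_mem 𝒜 ha
  rw [gradedLift, AlgHom.comp_apply, decompose_eq]
  exact toSemiring_of (fun i => (f i).toAddMonoidHom) hone (fun {i j} => hmul i j) i ⟨a, ha⟩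

end GradedLift

section LocalizedGrading

open DirectSum SetLike

variable {ι k B : Type*} [AddCommGroup ι] [CommRing k] [CommRing B] [Algebra k B]
  (𝒜 : ι → Submodule k B) [GradedMonoid 𝒜] (M : Submonoid B)
  (R : Type*) [CommRing R] [Algebra B R] [Algebra k R] [IsScalarTower k B R]

/-- The grading induced by `𝒜` on a localization `R` of `B` at `M`: the fractions `α / s` with `α`
and `s ∈ M` homogeneous are given degree `deg α - deg s`. -/
def localizedGrading (g : ι) : Submodule k R where
  carrier := {z | ∃ h, ∃ s ∈ M, s ∈ 𝒜 h ∧ ∃ α ∈ 𝒜 (h + g), z * algebraMap B R s = algebraMap B R α}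
  zero_mem' := ⟨0, 1, one_mem M, GradedOne.one_mem, 0, zero_mem _, by simp⟩
  add_mem' := by
    rintro y z ⟨i, s, hs, hsi, α, hα, hy⟩ ⟨j, t, ht, htj, β, hβ, hz⟩
    refine ⟨i + j, s * t, mul_mem hs ht, GradedMul.mul_mem hsi htj, t * α + s * β,
      add_mem ?_ ?_, ?_⟩
    · rw [show i + j + g = j + (i + g) by abel]
      exact GradedMul.mul_mem htj hα
    · rw [add_assoc]
      exact GradedMul.mul_mem hsi hβ
    · rw [map_add, map_mul, map_mul, map_mul, ← hy, ← hz]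
      ring
  smul_mem' := by
    rintro c z ⟨i, s, hs, hsi, α, hα, hz⟩
    refine ⟨i, s, hs, hsi, c • α, Submodule.smul_mem _ c hα, ?_⟩
    rw [smul_mul_assoc, hz, ← IsScalarTower.coe_toAlgHom' k B R, map_smul]

namespace localizedGrading

variable {𝒜}

theorem algebraMap_mem {α : B} {g : ι} (hα : α ∈ 𝒜 g) :
    algebraMap B R α ∈ localizedGrading 𝒜 M R g :=
  ⟨0, 1, one_mem M, GradedOne.one_mem, α, by rwa [zero_add], by simp⟩

variable (𝒜)

instance : GradedMonoid (localizedGrading 𝒜 M R) where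
  one_mem := map_one (algebraMap B R) ▸ algebraMap_mem M R GradedOne.one_mem
  mul_mem := by
    rintro g h y z ⟨i, s, hs, hsi, α, hα, hy⟩ ⟨j, t, ht, htj, β, hβ, hz⟩
    refine ⟨i + j, s * t, mul_mem hs ht, GradedMul.mul_mem hsi htj, α * β, ?_, ?_⟩
    · rw [show i + j + (g + h) = (i + g) + (j + h) by abel]
      exact GradedMul.mul_mem hα hβ
    · rw [map_mul, map_mul, ← hy, ← hz]
      ring

end localizedGrading

end LocalizedGrading

section LocalizedDecomposition

namespace localizedGrading

open DirectSum SetLike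

variable {ι k B : Type*} [AddCommGroup ι] [DecidableEq ι] [CommRing k] [CommRing B] [Algebra k B]
  (𝒜 : ι → Submodule k B) [GradedAlgebra 𝒜] (M : Submonoid B)
  (R : Type*) [CommRing R] [Algebra B R] [Algebra k R] [IsScalarTower k B R]

/-- The decomposition of `B` with respect to `𝒜`, read in the grading induced on a localization `R`
of `B`. -/
noncomputable def decomposeBase : B →ₐ[k] ⨁ g, localizedGrading 𝒜 M R g :=
  gradedLift 𝒜 (fun g => lof k ι (fun g => localizedGrading 𝒜 M R g) g ∘ₗ
      (IsScalarTower.toAlgHom k B R).toLinearMap.restrict fun _ => algebraMap_mem M R)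
    (of_eq_of_gradedMonoid_eq (Sigma.subtype_ext rfl (map_one (algebraMap B R))))
    (by
      intro g h a b
      refine Eq.trans (congrArg (lof k ι (fun g => localizedGrading 𝒜 M R g) (g + h)) ?_)
        (of_mul_of _ _).symm
      exact Subtype.ext (map_mul (algebraMap B R) (a : B) b))

variable {𝒜}

theorem decomposeBase_of_mem {α : B} {g : ι} (hα : α ∈ 𝒜 g) :
    decomposeBase 𝒜 M R α =
      of (fun g => localizedGrading 𝒜 M R g) g ⟨algebraMap B R α, algebraMap_mem M R hα⟩ :=
  gradedLift_of_mem 𝒜 _ _ _ hα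

theorem coeAlgHom_decomposeBase (α : B) :
    coeAlgHom (localizedGrading 𝒜 M R) (decomposeBase 𝒜 M R α) = algebraMap B R α := by
  induction α using Decomposition.inductionOn 𝒜 with
  | zero => rw [map_zero, map_zero, map_zero]
  | homogeneous α => rw [decomposeBase_of_mem M R α.2, coeAlgHom_of]
  | add α β hα hβ => rw [map_add, map_add, map_add, hα, hβ]

variable [IsLocalization M R]

theorem isUnit_decomposeBase (hM : ∀ s ∈ M, IsHomogeneousElem 𝒜 s) (s : M) :
    IsUnit (decomposeBase 𝒜 M R s) := by
  obtain ⟨h, hs⟩ := hM s s.2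
  have inv_mem : IsLocalization.mk' R 1 s ∈ localizedGrading 𝒜 M R (-h) :=
    ⟨h, s, s.2, hs, 1, by rw [add_neg_cancel]; exact GradedOne.one_mem,
      by rw [IsLocalization.mk'_spec]⟩
  refine .of_mul_eq_one (of (fun g => localizedGrading 𝒜 M R g) (-h) ⟨_, inv_mem⟩) ?_
  rw [decomposeBase_of_mem M R hs, of_mul_of]
  exact of_eq_of_gradedMonoid_eq (Sigma.subtype_ext (add_neg_cancel h)
    ((IsLocalization.mk'_spec' R 1 s).trans (map_one _)))

theorem liftAlgHom_decomposeBase_coe (hM : ∀ s ∈ M, IsHomogeneousElem 𝒜 s) (g : ι)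
    (z : localizedGrading 𝒜 M R g) :
    IsLocalization.liftAlgHom (S := R) (isUnit_decomposeBase M R hM) (z : R) =
      of (fun g => localizedGrading 𝒜 M R g) g z := by
  obtain ⟨h, s, hs, hsh, α, hα, hz⟩ := z.2
  refine (isUnit_decomposeBase M R hM ⟨s, hs⟩).mul_right_cancel ?_
  have lift_mul : IsLocalization.liftAlgHom (S := R) (isUnit_decomposeBase M R hM) (z : R) *
      decomposeBase 𝒜 M R s = decomposeBase 𝒜 M R α := by
    have lift_algebraMap (β : B) : IsLocalization.liftAlgHom (S := R) (isUnit_decomposeBase M R hM)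
        (algebraMap B R β) = decomposeBase 𝒜 M R β := IsLocalization.lift_eq _ β
    rw [← lift_algebraMap, ← lift_algebraMap, ← hz, map_mul]
  rw [lift_mul, decomposeBase_of_mem M R hα, decomposeBase_of_mem M R hsh, of_mul_of]
  exact of_eq_of_gradedMonoid_eq (Sigma.subtype_ext (add_comm h g) hz.symm)

/-- If `𝒜` grades `B` and `M` consists of homogeneous elements, then `localizedGrading 𝒜 M R` grades
the localization `R` of `B` at `M`. -/
noncomputable abbrev gradedAlgebra (hM : ∀ s ∈ M, IsHomogeneousElem 𝒜 s) :
    GradedAlgebra (localizedGrading 𝒜 M R) :=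
  .ofAlgHom _ (IsLocalization.liftAlgHom (S := R) (isUnit_decomposeBase M R hM))
    (IsLocalization.algHom_ext M <| AlgHom.ext fun α =>
      (congrArg (coeAlgHom _) (IsLocalization.lift_eq _ α)).trans (coeAlgHom_decomposeBase M R α))
    (liftAlgHom_decomposeBase_coe M R hM)

end localizedGrading

end LocalizedDecomposition

section HomogeneousUnits

open SetLike

theorem eq_sum_zsmul_single {σ : Type*} [Fintype σ] [DecidableEq σ] (g : σ → ℤ) :
    g = ∑ j, g j • (Pi.single j 1 : σ → ℤ) := by
  simpa [← Pi.single_smul] using (Finset.univ_sum_single g).symm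

theorem apply_ofAdd_eq_prod_zpow {σ G : Type*} [Fintype σ] [DecidableEq σ] [CommGroup G]
    (u : Multiplicative (σ → ℤ) →* G) (g : σ → ℤ) :
    u (.ofAdd g) = ∏ j, u (.ofAdd (Pi.single j 1)) ^ g j := by
  conv_lhs => rw [eq_sum_zsmul_single g]
  simp only [ofAdd_sum, ofAdd_zsmul, map_prod, map_zpow]

section Units

variable {ι k R : Type*} [AddCommGroup ι] [DecidableEq ι] [CommSemiring k] [CommRing R]
  [Algebra k R] {𝒜 : ι → Submodule k R} [GradedAlgebra 𝒜]

theorem val_zpow_mem_of_val_mem {w : Rˣ} {g : ι} (hw : (w : R) ∈ 𝒜 g) (n : ℤ) :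
    ((w ^ n : Rˣ) : R) ∈ 𝒜 (n • g) := by
  obtain ⟨n, rfl | rfl⟩ := n.eq_nat_or_neg
  · simpa using pow_mem_graded n hw
  · simpa using pow_mem_graded n (val_inv_mem_of_val_mem hw)

end Units

theorem exists_monoidHom_units_mem {σ k R : Type*} [Fintype σ] [DecidableEq σ] [CommSemiring k]
    [CommRing R] [Algebra k R] {𝒜 : (σ → ℤ) → Submodule k R} [GradedAlgebra 𝒜] {w : σ → Rˣ}
    (hw : ∀ j, (w j : R) ∈ 𝒜 (Pi.single j 1)) :
    ∃ u : Multiplicative (σ → ℤ) →* Rˣ, ∀ g, (u (.ofAdd g) : R) ∈ 𝒜 g := by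
  refine ⟨{ toFun := fun g => ∏ j, w j ^ g.toAdd j
            map_one' := by simp
            map_mul' := fun g h => ?_ }, fun g => ?_⟩
  · simp only [toAdd_mul, Pi.add_apply, zpow_add, Finset.prod_mul_distrib]
  · have hprod := prod_mem_graded 𝒜 (fun j => g j • (Pi.single j 1 : σ → ℤ))
      (fun j => ((w j ^ g j : Rˣ) : R)) (F := Finset.univ)
      fun j _ => val_zpow_mem_of_val_mem (hw j) (g j)
    rw [← eq_sum_zsmul_single g] at hprod
    simpa using hprod

end HomogeneousUnits

section DegreeZero

open DirectSum SetLike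

variable {ι k R : Type*} [AddCommGroup ι] [DecidableEq ι] [CommRing k] [CommRing R]
  [Algebra k R] {𝒜 : ι → Submodule k R} [GradedAlgebra 𝒜] (u : Multiplicative ι →* Rˣ)
  (hu : ∀ g, (u (.ofAdd g) : R) ∈ 𝒜 g)

/-- The retraction of a graded algebra onto its degree-zero part that sends a multiplicative system
`u` of homogeneous units to `1`: it divides an element of degree `g` by `u g`. -/
def dehomogenize : R →ₐ[k] GradeZero.subalgebra 𝒜 :=
  gradedLift 𝒜
    (fun g =>
      { toFun := fun a => ⟨a * u (.ofAdd (-g)), by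
          have := GradedMul.mul_mem a.2 (hu (-g))
          rwa [add_neg_cancel] at this⟩
        map_add' := fun a b => Subtype.ext (add_mul (a : R) b _)
        map_smul' := fun c a => Subtype.ext (smul_mul_assoc c (a : R) _) })
    (Subtype.ext (by simp))
    (fun g h a b => Subtype.ext (by
      change (a * b : R) * u (.ofAdd (-(g + h))) = a * u (.ofAdd (-g)) * (b * u (.ofAdd (-h)))
      rw [neg_add, ofAdd_add, map_mul, Units.val_mul, mul_mul_mul_comm]))

theorem coe_dehomogenize_of_mem {a : R} {g : ι} (ha : a ∈ 𝒜 g) :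
    (dehomogenize u hu a : R) = a * u (.ofAdd (-g)) :=
  congrArg Subtype.val (gradedLift_of_mem 𝒜 _ _ _ ha)

theorem dehomogenize_coe (a : GradeZero.subalgebra 𝒜) : dehomogenize u hu (a : R) = a :=
  Subtype.ext (by rw [coe_dehomogenize_of_mem u hu a.2]; simp)

theorem coe_dehomogenize_mul_of_mem {a : R} {g : ι} (ha : a ∈ 𝒜 g) :
    (dehomogenize u hu a : R) * u (.ofAdd g) = a := by
  rw [coe_dehomogenize_of_mem u hu ha, mul_assoc, ← Units.val_mul, ← map_mul, ← ofAdd_add]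
  simp

theorem associated_coe_dehomogenize {a : R} (ha : IsHomogeneousElem 𝒜 a) :
    Associated (dehomogenize u hu a : R) a :=
  ha.elim fun g hg => ⟨u (.ofAdd g), coe_dehomogenize_mul_of_mem u hu hg⟩

include hu

theorem finiteType_gradeZero [Algebra.FiniteType k R] :
    Algebra.FiniteType k (GradeZero.subalgebra 𝒜) :=
  .of_surjective (dehomogenize u hu) fun a => ⟨a, dehomogenize_coe u hu a⟩

theorem prime_of_prime_coe {p : GradeZero.subalgebra 𝒜} (hp : Prime (p : R)) : Prime p := by
  have dvd_of_coe_dvd {a : GradeZero.subalgebra 𝒜} (h : (p : R) ∣ a) : p ∣ a := by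
    simpa only [dehomogenize_coe] using map_dvd (dehomogenize u hu) h
  refine ⟨fun h => hp.ne_zero (congrArg Subtype.val h), fun h => hp.not_isUnit ?_, fun a b h => ?_⟩
  · exact h.map (GradeZero.subalgebra 𝒜).val
  · exact (hp.dvd_or_dvd (map_dvd (GradeZero.subalgebra 𝒜).val h)).imp dvd_of_coe_dvd dvd_of_coe_dvd

theorem linearIndependent_gradeZero_units :
    LinearIndependent (GradeZero.subalgebra 𝒜) fun g => (u (.ofAdd g) : R) := by
  rw [linearIndependent_iff']
  intro s c hsum g hg
  have hmem (h : ι) : c h • (u (.ofAdd h) : R) ∈ 𝒜 h := by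
    have := GradedMul.mul_mem (c h).2 (hu h)
    rwa [zero_add] at this
  have hcomp : (decompose 𝒜 (∑ h ∈ s, c h • (u (.ofAdd h) : R)) g : R) =
      c g • (u (.ofAdd g) : R) := by
    rw [decompose_sum, DirectSum.sum_apply, AddSubmonoidClass.coe_finsetSum,
      Finset.sum_eq_single_of_mem g hg fun h _ hne => decompose_of_mem_ne 𝒜 (hmem h) hne,
      decompose_of_mem_same 𝒜 (hmem g)]
  rw [hsum, decompose_zero, DirectSum.zero_apply, ZeroMemClass.coe_zero, eq_comm] at hcomp
  exact Subtype.ext ((u (.ofAdd g)).mul_left_eq_zero.1 hcomp)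

theorem adjoin_gradeZero_units_eq_top :
    Algebra.adjoin (GradeZero.subalgebra 𝒜) (Set.range fun g => (u (.ofAdd g) : R)) = ⊤ := by
  refine eq_top_iff.2 fun a _ => ?_
  induction a using Decomposition.inductionOn 𝒜 with
  | zero => exact zero_mem _
  | @homogeneous g a =>
    rw [← coe_dehomogenize_mul_of_mem u hu a.2]
    exact mul_mem (Subalgebra.algebraMap_mem _ (dehomogenize u hu (a : R)))
      (Algebra.subset_adjoin ⟨g, rfl⟩)
  | add a b ha hb => exact add_mem (ha trivial) (hb trivial)

variable [IsDomain R] [TwoUniqueSums ι] [UniqueFactorizationMonoid R]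

theorem exists_prime_factors_dehomogenize (a : R) (ha0 : a ≠ 0) (ha : IsHomogeneousElem 𝒜 a) :
    ∃ f : Multiset (GradeZero.subalgebra 𝒜), (∀ p ∈ f, Prime p) ∧
      Associated f.prod (dehomogenize u hu a) := by
  induction a using UniqueFactorizationMonoid.induction_on_prime with
  | h₁ => exact absurd rfl ha0
  | h₂ a ha_unit => exact ⟨0, by simp, (associated_one_iff_isUnit.2 (ha_unit.map _)).symm⟩
  | h₃ a p ha_ne hp ih =>
    obtain ⟨f, hf, hprod⟩ := ih ha_ne (isHomogeneousElem_right_of_mul ha hp.ne_zero)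
    have hp' : Prime (dehomogenize u hu p) := prime_of_prime_coe u hu <|
      (associated_coe_dehomogenize u hu (isHomogeneousElem_left_of_mul ha ha_ne)).prime_iff.2 hp
    refine ⟨dehomogenize u hu p ::ₘ f, Multiset.forall_mem_cons.2 ⟨hp', hf⟩, ?_⟩
    rw [Multiset.prod_cons, map_mul]
    exact hprod.mul_left _

theorem uniqueFactorizationMonoid_gradeZero :
    UniqueFactorizationMonoid (GradeZero.subalgebra 𝒜) :=
  .of_exists_prime_factors fun a ha => by
    simpa only [dehomogenize_coe] using exists_prime_factors_dehomogenize u hu (a : R)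
      (fun h => ha (Subtype.ext h)) ⟨0, a.2⟩

end DegreeZero

section GeneratorsOverDegreeZero

open SetLike

variable {σ k R : Type*} [Fintype σ] [Field k] [CommRing R] [Algebra k R]
  {𝒜 : (σ → ℤ) → Submodule k R} [GradedAlgebra 𝒜] (u : Multiplicative (σ → ℤ) →* Rˣ)
  (hu : ∀ g, (u (.ofAdd g) : R) ∈ 𝒜 g)

include hu

theorem algebraicIndependent_gradeZero_units [DecidableEq σ] :
    AlgebraicIndependent (GradeZero.subalgebra 𝒜) fun j => (u (.ofAdd (Pi.single j 1)) : R) := by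
  have prod_pow_eq (m : σ →₀ ℕ) : ∏ j, (u (.ofAdd (Pi.single j 1)) : R) ^ m j =
      u (.ofAdd fun j => (m j : ℤ)) := by
    rw [apply_ofAdd_eq_prod_zpow]
    simp
  have cast_injective : Function.Injective fun (m : σ →₀ ℕ) (j : σ) => (m j : ℤ) :=
    fun m n h => Finsupp.ext fun j => Nat.cast_injective (congrFun h j)
  have hli := (linearIndependent_gradeZero_units u hu).comp _ cast_injective
  rw [algebraicIndependent_iff]
  intro p hp
  rw [MvPolynomial.aeval_def, MvPolynomial.eval₂_eq'] at hp
  simp only [prod_pow_eq, ← Algebra.smul_def] at hp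
  ext m
  by_cases hm : m ∈ p.support
  · exact congrArg Subtype.val (linearIndependent_iff'.1 hli p.support (p.coeff ·) hp m hm)
  · rw [MvPolynomial.notMem_support_iff.1 hm, MvPolynomial.coeff_zero]

theorem isAlgebraic_adjoin_gradeZero_units [DecidableEq σ] [IsDomain R] :
    Algebra.IsAlgebraic (Algebra.adjoin (GradeZero.subalgebra 𝒜)
      (Set.range fun j => (u (.ofAdd (Pi.single j 1)) : R))) R := by
  set C := Algebra.adjoin (GradeZero.subalgebra 𝒜)
    (Set.range fun j => (u (.ofAdd (Pi.single j 1)) : R))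
  have isAlgebraic_zpow (j : σ) (n : ℤ) :
      IsAlgebraic C ((u (.ofAdd (Pi.single j 1)) ^ n : Rˣ) : R) := by
    have hpow (m : ℕ) : IsAlgebraic C ((u (.ofAdd (Pi.single j 1)) ^ m : Rˣ) : R) := by
      rw [Units.val_pow_eq_pow_val]
      exact isAlgebraic_algebraMap
        (⟨_, pow_mem (Algebra.subset_adjoin ⟨j, rfl⟩ : _ ∈ C) m⟩ : C)
    obtain ⟨m, rfl | rfl⟩ := n.eq_nat_or_neg
    · exact_mod_cast hpow m
    · let := (u (.ofAdd (Pi.single j 1)) ^ m).invertible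
      rw [zpow_neg, zpow_natCast, ← invOf_units]
      exact (hpow m).invOf
  have adjoin_le : Algebra.adjoin (GradeZero.subalgebra 𝒜) (Set.range fun g => (u (.ofAdd g) : R)) ≤
      (Subalgebra.algebraicClosure C R).restrictScalars (GradeZero.subalgebra 𝒜) := by
    refine Algebra.adjoin_le ?_
    rintro _ ⟨g, rfl⟩
    simp only [apply_ofAdd_eq_prod_zpow u g, Units.coe_prod]
    exact prod_mem fun j _ => isAlgebraic_zpow j (g j)
  rw [adjoin_gradeZero_units_eq_top u hu] at adjoin_le
  exact ⟨fun a => adjoin_le trivial⟩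

theorem trdeg_gradeZero_eq_one [IsDomain R]
    (htr : Algebra.trdeg k R = (Fintype.card σ + 1 : ℕ)) :
    Algebra.trdeg k (GradeZero.subalgebra 𝒜) = 1 := by
  classical
  have hbasis := (algebraicIndependent_gradeZero_units u hu).isTranscendenceBasis_iff_isAlgebraic.2
    (isAlgebraic_adjoin_gradeZero_units u hu)
  have hcard : Algebra.trdeg (GradeZero.subalgebra 𝒜) R = Fintype.card σ := by
    rw [← Cardinal.lift_eq_nat_iff, ← hbasis.lift_cardinalMk_eq_trdeg, Cardinal.mk_fintype,
      Cardinal.lift_natCast]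
  rw [← trdeg_add_eq k (GradeZero.subalgebra 𝒜) (A := R), hcard, Nat.cast_add, Nat.cast_one,
    add_comm (Fintype.card σ : Cardinal)] at htr
  exact Cardinal.eq_of_add_eq_add_right htr Cardinal.natCast_lt_aleph0

variable {K : Type*} [Field K] [Algebra R K] [IsFractionRing R K] [Algebra k K]
  [DecidableEq σ]

theorem intermediateField_eq_top_of_gradeZero_units_mem (L : IntermediateField k K)
    (hL : ∀ a ∈ 𝒜 0, algebraMap R K a ∈ L)
    (huL : ∀ j, algebraMap R K (u (.ofAdd (Pi.single j 1))) ∈ L) : L = ⊤ := by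
  have unit_mem (g : σ → ℤ) : algebraMap R K (u (.ofAdd g)) ∈ L := by
    rw [apply_ofAdd_eq_prod_zpow u g, Units.coe_prod, map_prod]
    refine prod_mem fun j _ => ?_
    have := zpow_mem (huL j) (g j)
    rwa [← MonoidHom.coe_coe, ← Units.coe_map, ← Units.val_zpow_eq_zpow_val, ← map_zpow] at this
  have algebraMap_mem (a : R) : algebraMap R K a ∈ L := by
    have ha : a ∈ Algebra.adjoin (GradeZero.subalgebra 𝒜)
        (Set.range fun g => (u (.ofAdd g) : R)) := by
      rw [adjoin_gradeZero_units_eq_top u hu]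
      trivial
    induction ha using Algebra.adjoin_induction with
    | mem x hx =>
      obtain ⟨g, rfl⟩ := hx
      exact unit_mem g
    | algebraMap a => exact hL a a.2
    | add x y _ _ hx hy => rw [map_add]; exact add_mem hx hy
    | mul x y _ _ hx hy => rw [map_mul]; exact mul_mem hx hy
  refine eq_top_iff.2 fun z _ => ?_
  obtain ⟨x, y, _, rfl⟩ := IsFractionRing.div_surjective R z
  exact div_mem (algebraMap_mem x) (algebraMap_mem y)

variable [IsScalarTower k R K] [IsAlgClosed k] [IsDomain R] [UniqueFactorizationMonoid R]
  [Algebra.FiniteType k R]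

theorem exists_adjoin_insert_units_eq_top (htr : Algebra.trdeg k R = (Fintype.card σ + 1 : ℕ)) :
    ∃ f : K, IntermediateField.adjoin k
      (insert f (Set.range fun j => algebraMap R K (u (.ofAdd (Pi.single j 1))))) = ⊤ := by
  have htrA := trdeg_gradeZero_eq_one u hu htr
  have := finiteType_gradeZero u hu
  have := uniqueFactorizationMonoid_gradeZero u hu
  have := isPrincipalIdealRing_of_trdeg_eq_one k htrA
  obtain ⟨f, hf⟩ := exists_adjoin_simple_eq_top_of_isPrincipalIdealRing
    (FractionRing (GradeZero.subalgebra 𝒜)) htrA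
  let toK : GradeZero.subalgebra 𝒜 →ₐ[k] K :=
    (IsScalarTower.toAlgHom k R K).comp (GradeZero.subalgebra 𝒜).val
  have toK_injective : Function.Injective toK :=
    (IsFractionRing.injective R K).comp Subtype.val_injective
  let φ : FractionRing (GradeZero.subalgebra 𝒜) →ₐ[k] K := IsFractionRing.liftAlgHom toK_injective
  refine ⟨φ f, intermediateField_eq_top_of_gradeZero_units_mem u hu _ (fun a ha => ?_) fun j =>
    IntermediateField.subset_adjoin _ _ (Set.mem_insert_of_mem _ ⟨j, rfl⟩)⟩
  have φ_algebraMap : φ (algebraMap (GradeZero.subalgebra 𝒜) _ ⟨a, ha⟩) = algebraMap R K a :=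
    IsFractionRing.lift_algebraMap toK_injective _
  have φ_mem : φ (algebraMap (GradeZero.subalgebra 𝒜) _ ⟨a, ha⟩) ∈
      (IntermediateField.adjoin k {f}).map φ :=
    ⟨_, by rw [hf]; trivial, rfl⟩
  rw [IntermediateField.adjoin_map, Set.image_singleton, φ_algebraMap] at φ_mem
  exact IntermediateField.adjoin.mono _ _ _ (Set.singleton_subset_iff.2 (Set.mem_insert _ _)) φ_mem

end GeneratorsOverDegreeZero

section EffectiveGrading

open SetLike

variable {ι k B : Type*} [AddCommGroup ι] [CommRing k] [CommRing B] [IsDomain B] [Algebra k B]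
  {𝒜 : ι → Submodule k B}

theorem exists_mem_ne_zero_of_mem_closure [GradedMonoid 𝒜] {g : ι}
    (hg : g ∈ AddSubgroup.closure {g | 𝒜 g ≠ ⊥}) :
    ∃ i j, g = i - j ∧ (∃ a ∈ 𝒜 i, a ≠ 0) ∧ ∃ b ∈ 𝒜 j, b ≠ 0 := by
  induction hg using AddSubgroup.closure_induction with
  | mem g hg =>
    exact ⟨g, 0, (sub_zero g).symm, Submodule.exists_mem_ne_zero_of_ne_bot hg, 1,
      GradedOne.one_mem, one_ne_zero⟩
  | zero =>
    exact ⟨0, 0, (sub_zero 0).symm, ⟨1, GradedOne.one_mem, one_ne_zero⟩, 1, GradedOne.one_mem,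
      one_ne_zero⟩
  | add g h _ _ ihg ihh =>
    obtain ⟨i, j, rfl, ⟨a, ha, ha0⟩, b, hb, hb0⟩ := ihg
    obtain ⟨i', j', rfl, ⟨a', ha', ha0'⟩, b', hb', hb0'⟩ := ihh
    exact ⟨i + i', j + j', sub_add_sub_comm i j i' j',
      ⟨a * a', GradedMul.mul_mem ha ha', mul_ne_zero ha0 ha0'⟩,
      b * b', GradedMul.mul_mem hb hb', mul_ne_zero hb0 hb0'⟩
  | neg g _ ih =>
    obtain ⟨i, j, rfl, ha, hb⟩ := ih
    exact ⟨j, i, neg_sub i j, hb, ha⟩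

theorem exists_away_units_mem [DecidableEq ι] [GradedAlgebra 𝒜] {σ : Type*} [Finite σ] {g : σ → ι}
    (hg : ∀ j, g j ∈ AddSubgroup.closure {g | 𝒜 g ≠ ⊥}) :
    ∃ h : B, h ≠ 0 ∧ IsHomogeneousElem 𝒜 h ∧ ∃ w : σ → (Localization.Away h)ˣ,
      ∀ j, (w j : Localization.Away h) ∈
        localizedGrading 𝒜 (.powers h) (Localization.Away h) (g j) := by
  have := Fintype.ofFinite σ
  choose i i' hsub a b using fun j => exists_mem_ne_zero_of_mem_closure (hg j)
  choose a ha ha0 using a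
  choose b hb hb0 using b
  set h := ∏ j, a j * b j
  have h_homogeneous : IsHomogeneousElem 𝒜 h :=
    prod_mem (S := homogeneousSubmonoid 𝒜) fun j _ => ⟨_, GradedMul.mul_mem (ha j) (hb j)⟩
  let := localizedGrading.gradedAlgebra (𝒜 := 𝒜) (.powers h) (Localization.Away h)
    (Submonoid.powers_le (P := homogeneousSubmonoid 𝒜).2 h_homogeneous)
  have isUnit_of_dvd {c : B} (hc : c ∣ h) : IsUnit (algebraMap B (Localization.Away h) c) :=
    isUnit_of_dvd_unit (map_dvd _ hc) (IsLocalization.Away.algebraMap_isUnit h)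
  have dvd_h (j : σ) : a j * b j ∣ h := Finset.dvd_prod_of_mem _ (Finset.mem_univ j)
  choose v hv using fun j => isUnit_of_dvd (dvd_of_mul_right_dvd (dvd_h j))
  choose w hw using fun j => isUnit_of_dvd (dvd_of_mul_left_dvd (dvd_h j))
  refine ⟨h, Finset.prod_ne_zero_iff.2 fun j _ => mul_ne_zero (ha0 j) (hb0 j), h_homogeneous,
    fun j => v j * (w j)⁻¹, fun j => ?_⟩
  rw [hsub, sub_eq_add_neg, Units.val_mul]
  exact GradedMul.mul_mem (hv j ▸ localizedGrading.algebraMap_mem _ _ (ha j))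
    (val_inv_mem_of_val_mem (hw j ▸ localizedGrading.algebraMap_mem _ _ (hb j)))

end EffectiveGrading

section Rationality

theorem nonempty_algEquiv_of_adjoin_range_eq_top {σ k K : Type*} [Finite σ] [Field k] [Field K]
    [Algebra k K] {y : σ → K} (hy : IntermediateField.adjoin k (Set.range y) = ⊤)
    (htr : Algebra.trdeg k K = Nat.card σ) :
    Nonempty (FractionRing (MvPolynomial σ k) ≃ₐ[k] K) := by
  have : Algebra.IsAlgebraic (Algebra.adjoin k (Set.range y)) K := by
    rw [← IntermediateField.isAlgebraic_adjoin_iff_top, hy, Algebra.isAlgebraic_iff_isIntegral]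
    exact Algebra.isIntegral_of_surjective IntermediateField.topEquiv.surjective
  have hbasis : IsTranscendenceBasis k y :=
    Algebra.IsAlgebraic.isTranscendenceBasis_of_lift_le_trdeg_of_finite k y
      (by rw [htr, ← Nat.cast_card (α := σ), Cardinal.lift_natCast, Cardinal.lift_natCast])
  exact ⟨hbasis.1.aevalEquivField.trans
    ((IntermediateField.equivOfEq hy).trans IntermediateField.topEquiv)⟩

theorem exists_adjoin_range_eq_top_of_effective_grading {k B : Type*} (K : Type*) [Field k]
    [IsAlgClosed k] [CommRing B] [IsDomain B] [Algebra k B] [Algebra.FiniteType k B]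
    [UniqueFactorizationMonoid B] [Field K] [Algebra B K] [IsFractionRing B K] [Algebra k K]
    [IsScalarTower k B K] {n : ℕ} (𝒜 : (Fin n → ℤ) → Submodule k B) [GradedAlgebra 𝒜]
    (heff : AddSubgroup.closure {g | 𝒜 g ≠ ⊥} = ⊤) (htr : Algebra.trdeg k K = (n + 1 : ℕ)) :
    ∃ y : Fin (n + 1) → K, IntermediateField.adjoin k (Set.range y) = ⊤ := by
  obtain ⟨h, h0, h_homogeneous, w, hw⟩ := exists_away_units_mem (𝒜 := 𝒜)
    (g := fun j : Fin n => Pi.single j 1) fun j => heff ▸ AddSubgroup.mem_top _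
  have powers_le : Submonoid.powers h ≤ nonZeroDivisors B :=
    powers_le_nonZeroDivisors_of_noZeroDivisors h0
  let := localizedGrading.gradedAlgebra (𝒜 := 𝒜) (.powers h) (Localization.Away h)
    (Submonoid.powers_le (P := SetLike.homogeneousSubmonoid 𝒜).2 h_homogeneous)
  have : IsDomain (Localization.Away h) := IsLocalization.isDomain_localization powers_le
  have : Algebra.FiniteType k (Localization.Away h) :=
    .trans (S := B) inferInstance (IsLocalization.finiteType_of_monoid_fg (.powers h) _)
  let := IsLocalization.localizationAlgebraOfSubmonoidLe (Localization.Away h) K (.powers h)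
    (nonZeroDivisors B) powers_le
  have := IsLocalization.localization_isScalarTower_of_submonoid_le (Localization.Away h) K
    (.powers h) (nonZeroDivisors B) powers_le
  have : IsScalarTower k (Localization.Away h) K := .to₁₃₄ k B (Localization.Away h) K
  have := IsFractionRing.isFractionRing_of_isDomain_of_isLocalization (.powers h)
    (Localization.Away h) K
  obtain ⟨u, hu⟩ := exists_monoidHom_units_mem hw
  obtain ⟨f, hf⟩ := exists_adjoin_insert_units_eq_top (K := K) u hu <| by
    rwa [Fintype.card_fin, trdeg_eq_natCast_iff_of_isFractionRing k _ K]
  exact ⟨Fin.cons f _, by rwa [Fin.range_cons]⟩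

end Rationality

open MvPolynomial in
/-- Over an algebraically closed field `k`, an affine UFD `B` of dimension `d ≥ 1`
with an effective `ℤ^{d-1}`-grading is rational over `k`. -/
theorem affine_graded_ufd_rational
    (k B : Type*) [Field k] [IsAlgClosed k] [CommRing B] [IsDomain B] [Algebra k B]
    [Algebra.FiniteType k B] [UniqueFactorizationMonoid B]
    (d : ℕ) (hd : 1 ≤ d) (hdim : ringKrullDim B = d)
    (𝒜 : (Fin (d - 1) → ℤ) → Submodule k B) [GradedAlgebra 𝒜]
    (heff : AddSubgroup.closure {g : Fin (d - 1) → ℤ | 𝒜 g ≠ ⊥} = ⊤) :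
    ∃ e : FractionRing B ≃+* FractionRing (MvPolynomial (Fin d) k),
      ∀ c : k, e (algebraMap B (FractionRing B) (algebraMap k B c)) =
        algebraMap (MvPolynomial (Fin d) k) (FractionRing (MvPolynomial (Fin d) k)) (C c) := by
  obtain ⟨n, rfl⟩ : ∃ n, d = n + 1 := ⟨d - 1, by lia⟩
  have htr : Algebra.trdeg k (FractionRing B) = (n + 1 : ℕ) :=
    (trdeg_eq_natCast_iff_of_isFractionRing k B _).1 (trdeg_eq_of_ringKrullDim_eq k B hdim)
  obtain ⟨y, hy⟩ :=
    exists_adjoin_range_eq_top_of_effective_grading (n := n) (FractionRing B) 𝒜 heff htr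
  obtain ⟨e⟩ := nonempty_algEquiv_of_adjoin_range_eq_top hy (by rw [htr, Nat.card_fin])
  refine ⟨e.symm.toRingEquiv, fun c => ?_⟩
  rw [← IsScalarTower.algebraMap_apply k B (FractionRing B), ← MvPolynomial.algebraMap_eq,
    ← IsScalarTower.algebraMap_apply k (MvPolynomial (Fin (n + 1)) k)]
  exact e.symm.commutes c
end

section
/- Let k be a field and let Δ be trinomial data over k. Then the group of units of k[Δ] equals k^*, i.e., (k[Δ])^* = k^*. -/
open MvPolynomial

/-- Trinomial data `Δ` over a field `k`: an integer `n ≥ 2` with a partition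
`n = n_0 + ⋯ + n_r` (`r ≥ 1`, `n_i ≥ 1`), exponent vectors `β_i ∈ ℤ₊^{n_i}` with
`gcd(d_i, d_j) = 1` for `i ≠ j` where `d_i = gcd(β_{i1}, …, β_{i n_i})`, and distinct
scalars `λ_2, …, λ_r ∈ k^*`. -/
structure TrinomialData (k : Type*) [Field k] where
  /-- the number `r` of parts minus one -/
  r : ℕ
  one_le_r : 1 ≤ r
  /-- the partition `n = n_0 + ⋯ + n_r` -/
  n : Fin (r + 1) → ℕ
  one_le_n : ∀ i, 1 ≤ n i
  two_le_total : 2 ≤ ∑ i, n i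
  /-- the exponent vectors `β_i` -/
  β : (i : Fin (r + 1)) → Fin (n i) → ℕ
  β_pos : ∀ i j, 0 < β i j
  gcd_coprime : ∀ i j, i ≠ j →
    Nat.Coprime (Finset.univ.gcd (β i)) (Finset.univ.gcd (β j))
  /-- the scalars `λ_i` (only the values for `2 ≤ i` are relevant) -/
  lam : Fin (r + 1) → k
  lam_ne_zero : ∀ i : Fin (r + 1), 2 ≤ (i : ℕ) → lam i ≠ 0
  lam_injOn : ∀ i j : Fin (r + 1), 2 ≤ (i : ℕ) → 2 ≤ (j : ℕ) → lam i = lam j → i = j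

variable {k : Type*} [Field k]

/-- The variables `t_{ij}`, `0 ≤ i ≤ r`, `1 ≤ j ≤ n_i`. -/
def TrinomialData.Vars (Δ : TrinomialData k) : Type :=
  Σ i : Fin (Δ.r + 1), Fin (Δ.n i)

/-- The monomial `T_i^{β_i} = t_{i1}^{β_{i1}} ⋯ t_{i n_i}^{β_{i n_i}}`. -/
noncomputable def TrinomialData.mon (Δ : TrinomialData k) (i : Fin (Δ.r + 1)) :
    MvPolynomial Δ.Vars k :=
  ∏ j : Fin (Δ.n i), (X (⟨i, j⟩ : Δ.Vars)) ^ Δ.β i j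

/-- The ideal of trinomial relations `T_0^{β_0} + λ_i T_1^{β_1} + T_i^{β_i}`, `2 ≤ i ≤ r`. -/
noncomputable def TrinomialData.relIdeal (Δ : TrinomialData k) :
    Ideal (MvPolynomial Δ.Vars k) :=
  Ideal.span {p | ∃ i : Fin (Δ.r + 1), 2 ≤ (i : ℕ) ∧
    p = Δ.mon 0 + C (Δ.lam i) * Δ.mon 1 + Δ.mon i}

/-- The ring `k[Δ]` associated to trinomial data `Δ`. -/
noncomputable abbrev TrinomialData.Ring (Δ : TrinomialData k) : Type _ :=
  MvPolynomial Δ.Vars k ⧸ Δ.relIdeal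

/-- `Δ` is reduced if either `r = 1` and `β_{01} = β_{11} = 1`, or `r ≥ 2` and
`|β_i| ≥ 2` for each `i`. -/
def TrinomialData.Reduced (Δ : TrinomialData k) : Prop :=
  (Δ.r = 1 ∧ Δ.β 0 ⟨0, Δ.one_le_n 0⟩ = 1 ∧ Δ.β 1 ⟨0, Δ.one_le_n 1⟩ = 1) ∨
  (2 ≤ Δ.r ∧ ∀ i, 2 ≤ ∑ j, Δ.β i j)

/-!
A reduced `k`-algebra graded by the natural numbers with `k` in degree zero has only scalar
units: the coaction `x ↦ x t ^ w x` sends a unit to a unit of the polynomial ring in `t` over a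
reduced ring, hence to a constant in `t`, and its values at `t = 1` and `t = 0` are the unit itself
and a scalar. Giving each `t_{ij}` a suitable positive weight makes all `T_i^{β_i}` of equal weight,
so this applies to `k[Δ]` once `k[Δ]` is known to be reduced.

In fact `k[Δ]` is a domain. Let `M` be the quotient of the lattice of exponent vectors by the
differences `β_i - β_j`; pairwise coprimality of the `d_i` says precisely that `M` is torsion-free,
so the group algebra `K[M]` is a domain for every field `K`. Take `K` algebraically closed with `t`
transcendental over `k`, and send `t_{ij}` to its class in `M` times a scalar, the scalars being
chosen so that `T_0`, `T_1` and `T_i` acquire the coefficients `1`, `t` and `-(1 + λ_i t)`. This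
defines a map from `k[Δ]` to `K[M]`. It is injective: `k[Δ]` is spanned by the products
`x ^ γ T_0 ^ a T_1 ^ b` with `x ^ γ` divisible by no `T_i`, and their images are linearly
independent because `γ` and `a + b` can be read off from the degree in `M`, and `b` from the power
of `t`.
-/

lemma sum_ne_zero_of_ne_zero {α : Type*} [Fintype α] {b : α → ℕ} (hb : b ≠ 0) :
    ∑ j, b j ≠ 0 :=
  fun h ↦ hb (funext fun j ↦ Finset.sum_eq_zero_iff.1 h j (Finset.mem_univ j))

lemma dvd_of_sum_eq_zero_of_pairwise_isCoprime {R ι : Type*} [CommRing R] [Fintype ι]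
    {d c : ι → R} (hd : Pairwise fun i j ↦ IsCoprime (d i) (d j)) (hc : ∑ i, c i = 0) {n : R}
    (hn : ∀ i, n ∣ c i * d i) (i : ι) : n ∣ c i := by
  classical
  have hcop : IsCoprime (d i) (∏ j ∈ Finset.univ.erase i, d j) :=
    IsCoprime.prod_right fun j hj ↦ hd (Finset.ne_of_mem_erase hj).symm
  have hothers : n ∣ ∑ j ∈ Finset.univ.erase i, c j * ∏ l ∈ Finset.univ.erase i, d l :=
    Finset.dvd_sum fun j hj ↦ (hn j).trans <| mul_dvd_mul_left _ <| Finset.dvd_prod_of_mem d hj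
  have hci : c i = -∑ j ∈ Finset.univ.erase i, c j := by
    rw [eq_neg_iff_add_eq_zero, Finset.add_sum_erase _ _ (Finset.mem_univ i), hc]
  have hprod : n ∣ c i * ∏ j ∈ Finset.univ.erase i, d j := by
    rwa [hci, neg_mul, dvd_neg, Finset.sum_mul]
  obtain ⟨a, b, hab⟩ := hcop
  rw [← mul_one (c i), ← hab, mul_add, mul_left_comm, mul_left_comm (c i)]
  exact dvd_add ((hn i).mul_left a) (hprod.mul_left b)

lemma eq_zero_of_mem_span_range_of_linearIndependent_comp {R V W ι : Type*} [Ring R]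
    [AddCommGroup V] [AddCommGroup W] [Module R V] [Module R W] {f : V →ₗ[R] W} {v : ι → V}
    (hv : LinearIndependent R (f ∘ v)) {x : V} (hx : x ∈ Submodule.span R (Set.range v))
    (hfx : f x = 0) : x = 0 := by
  obtain ⟨c, rfl⟩ := Finsupp.mem_span_range_iff_exists_finsupp.1 hx
  have hc : Finsupp.linearCombination R (f ∘ v) c = 0 := by
    simpa [Finsupp.linearCombination_apply, Finsupp.sum] using hfx
  rw [linearIndependent_iff.1 hv c hc, Finsupp.sum_zero_index]

lemma linearIndependent_mul_pow_of_transcendental {R A : Type*} [CommRing R] [CommRing A]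
    [IsDomain A] [Algebra R A] {a t : A} (ha : a ≠ 0) (ht : Transcendental R t) :
    LinearIndependent R fun n : ℕ ↦ a * t ^ n := by
  have hinj : Function.Injective
      ((LinearMap.mulLeft R a).comp (Polynomial.aeval (R := R) t).toLinearMap) :=
    (mul_right_injective₀ ha).comp (transcendental_iff_injective.1 ht)
  have := (Polynomial.basisMonomials R).linearIndependent.map' _ (LinearMap.ker_eq_bot.2 hinj)
  simpa [Function.comp_def, Polynomial.aeval_monomial] using this

lemma linearIndependent_addMonoidAlgebra_single {R S M P φ : Type*} [Ring R] [Ring S] [Module R S]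
    {d : P → M} (hd : Function.Injective d) {f : P → φ → S}
    (hf : ∀ p, LinearIndependent R (f p)) :
    LinearIndependent R fun s : P × φ ↦ AddMonoidAlgebra.single (d s.1) (f s.1 s.2) := by
  have hsigma : LinearIndependent R fun s : Σ _ : P, φ ↦ Finsupp.single s.1 (f s.1 s.2) :=
    Finsupp.linearIndependent_single f hf
  have hinj : Function.Injective ((AddMonoidAlgebra.coeffLinearEquiv R).symm.toLinearMap ∘ₗ
      Finsupp.lmapDomain S R d) :=
    (AddMonoidAlgebra.coeffLinearEquiv R).symm.injective.comp (Finsupp.mapDomain_injective hd)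
  have := (hsigma.map' _ (LinearMap.ker_eq_bot.2 hinj)).comp _
    (Equiv.sigmaEquivProd P φ).symm.injective
  simpa [Function.comp_def] using this

section WeightedHomogeneous

variable {R σ B : Type*}

lemma eval_zero_eq_self_of_isUnit {A : Type*} [CommRing A] [IsReduced A]
    (f : A →+* Polynomial A) (hf : ∀ a, (f a).eval 1 = a) {u : A} (hu : IsUnit u) :
    (f u).eval 0 = u := by
  have hdeg : (f u).natDegree = 0 := by
    by_contra h
    exact Polynomial.not_isUnit_of_natDegree_pos_of_isReduced _ (Nat.pos_of_ne_zero h) (hu.map f)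
  calc (f u).eval 0 = (f u).eval 1 := by
        rw [Polynomial.eq_C_of_natDegree_eq_zero hdeg, Polynomial.eval_C, Polynomial.eval_C]
    _ = u := hf u

lemma aeval_mul_pow_of_isWeightedHomogeneous [CommSemiring R] [CommSemiring B] [Algebra R B]
    {w : σ → ℕ} {p : MvPolynomial σ R} {n : ℕ} (hp : IsWeightedHomogeneous w p n)
    (a : σ → B) (t : B) :
    aeval (fun x ↦ a x * t ^ w x) p = aeval a p * t ^ n := by
  rw [aeval_def, aeval_def, eval₂_eq, eval₂_eq, Finset.sum_mul]
  refine Finset.sum_congr rfl fun d hd ↦ ?_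
  have hweight : ∑ x ∈ d.support, w x * d x = n := by
    rw [← hp (mem_support_iff.1 hd), Finsupp.weight_apply, Finsupp.sum]
    simp only [smul_eq_mul, mul_comm]
  simp only [mul_pow, Finset.prod_mul_distrib, ← pow_mul, Finset.prod_pow_eq_pow_sum, hweight,
    mul_assoc]

variable [CommRing R]

/-- The substitution `x ↦ x t ^ w x`, with the coefficient of each power of `t` reduced modulo
`I`. -/
noncomputable def scaleVars (I : Ideal (MvPolynomial σ R)) (w : σ → ℕ) :
    MvPolynomial σ R →ₐ[R] Polynomial (MvPolynomial σ R ⧸ I) :=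
  aeval fun x ↦ Polynomial.C (Ideal.Quotient.mk I (X x)) * Polynomial.X ^ w x

lemma scaleVars_of_isWeightedHomogeneous (I : Ideal (MvPolynomial σ R)) {w : σ → ℕ}
    {p : MvPolynomial σ R} {n : ℕ} (hp : IsWeightedHomogeneous w p n) :
    scaleVars I w p = Polynomial.C (Ideal.Quotient.mk I p) * Polynomial.X ^ n := by
  have hC : aeval (fun x ↦ Polynomial.C (Ideal.Quotient.mk I (X x))) =
      Polynomial.CAlgHom.comp (Ideal.Quotient.mkₐ R I) := by
    ext x; simp
  rw [scaleVars, aeval_mul_pow_of_isWeightedHomogeneous hp, hC]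
  rfl

lemma eval_one_scaleVars (I : Ideal (MvPolynomial σ R)) (w : σ → ℕ) (p : MvPolynomial σ R) :
    (scaleVars I w p).eval 1 = Ideal.Quotient.mk I p := by
  induction p using MvPolynomial.induction_on with
  | C a =>
    simp [scaleVars, Polynomial.algebraMap_apply, ← Ideal.Quotient.mk_algebraMap, algebraMap_eq]
  | add p q hp hq => simp only [map_add, Polynomial.eval_add, hp, hq]
  | mul_X p x hp => simp only [map_mul, Polynomial.eval_mul, hp]; simp [scaleVars]

lemma eval_zero_scaleVars (I : Ideal (MvPolynomial σ R)) {w : σ → ℕ} (hw : ∀ x, w x ≠ 0)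
    (p : MvPolynomial σ R) :
    (scaleVars I w p).eval 0 = algebraMap R (MvPolynomial σ R ⧸ I) (constantCoeff p) := by
  induction p using MvPolynomial.induction_on with
  | C a => simp [scaleVars, Polynomial.algebraMap_apply]
  | add p q hp hq => simp only [map_add, Polynomial.eval_add, hp, hq]
  | mul_X p x hp => simp only [map_mul, Polynomial.eval_mul, hp]; simp [scaleVars, hw x]

variable {S : Set (MvPolynomial σ R)} {w : σ → ℕ}

lemma scaleVars_eq_zero_of_mem_span (hS : ∀ p ∈ S, ∃ n, IsWeightedHomogeneous w p n)
    {p : MvPolynomial σ R} (hp : p ∈ Ideal.span S) : scaleVars (Ideal.span S) w p = 0 := by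
  suffices Ideal.span S ≤ RingHom.ker (scaleVars (Ideal.span S) w) from this hp
  refine Ideal.span_le.2 fun q hq ↦ ?_
  obtain ⟨n, hn⟩ := hS q hq
  rw [SetLike.mem_coe, RingHom.mem_ker, scaleVars_of_isWeightedHomogeneous _ hn,
    Ideal.Quotient.eq_zero_iff_mem.2 (Ideal.subset_span hq), map_zero, zero_mul]

theorem mk_eq_algebraMap_constantCoeff_of_isUnit [IsReduced (MvPolynomial σ R ⧸ Ideal.span S)]
    (hS : ∀ p ∈ S, ∃ n, IsWeightedHomogeneous w p n) (hw : ∀ x, w x ≠ 0)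
    {p : MvPolynomial σ R} (hp : IsUnit (Ideal.Quotient.mk (Ideal.span S) p)) :
    Ideal.Quotient.mk (Ideal.span S) p =
      algebraMap R (MvPolynomial σ R ⧸ Ideal.span S) (constantCoeff p) := by
  let coaction := Ideal.Quotient.lift (Ideal.span S) (scaleVars (Ideal.span S) w).toRingHom
    fun q hq ↦ scaleVars_eq_zero_of_mem_span hS hq
  have hone : ∀ a, (coaction a).eval 1 = a := fun a ↦ by
    obtain ⟨q, rfl⟩ := Ideal.Quotient.mk_surjective a
    exact eval_one_scaleVars _ w q
  exact (eval_zero_eq_self_of_isUnit coaction hone hp).symm.trans (eval_zero_scaleVars _ hw p)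

lemma isUnit_constantCoeff_of_isUnit_mk {I : Ideal (MvPolynomial σ R)}
    (hI : I ≤ RingHom.ker (constantCoeff (R := R) (σ := σ))) {p : MvPolynomial σ R}
    (hp : IsUnit (Ideal.Quotient.mk I p)) : IsUnit (constantCoeff p) :=
  hp.map (Ideal.Quotient.lift I constantCoeff hI)

end WeightedHomogeneous

section BlockExponent

variable {ι : Type*} {κ : ι → Type*} [∀ i, Fintype (κ i)] (β : ∀ i, κ i → ℕ)

/-- The exponent vector of the `i`-th block monomial `T_i^{β_i}`. -/
noncomputable def blockExponent (i : ι) : (Σ i, κ i) →₀ ℕ :=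
  (Finsupp.equivFunOnFinite.symm (β i)).embDomain (Function.Embedding.sigmaMk i)

lemma blockExponent_apply_mk (i : ι) (j : κ i) : blockExponent β i ⟨i, j⟩ = β i j :=
  Finsupp.embDomain_apply_self (Function.Embedding.sigmaMk i) _ j

lemma blockExponent_apply [DecidableEq ι] (i : ι) (x : Σ i, κ i) :
    blockExponent β i x = if x.1 = i then β x.1 x.2 else 0 := by
  split_ifs with h
  · subst h; exact blockExponent_apply_mk β x.1 x.2
  · exact Finsupp.embDomain_of_notMem_range _ _ _ (by rintro ⟨j, rfl⟩; exact h rfl)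

variable {β} in
lemma blockExponent_ne_zero {i : ι} (hβ : β i ≠ 0) : blockExponent β i ≠ 0 := by
  obtain ⟨j, hj⟩ := Function.ne_iff.1 hβ
  exact Finsupp.ne_iff.2 ⟨⟨i, j⟩, by rwa [blockExponent_apply_mk]⟩

lemma blockExponent_le_iff {i : ι} {γ : (Σ i, κ i) →₀ ℕ} :
    blockExponent β i ≤ γ ↔ ∀ j, β i j ≤ γ ⟨i, j⟩ := by
  refine ⟨fun h j ↦ blockExponent_apply_mk β i j ▸ h ⟨i, j⟩, fun h x ↦ ?_⟩
  classical
  rw [blockExponent_apply]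
  split_ifs with hx
  · subst hx; exact h x.2
  · exact Nat.zero_le _

/-- No block monomial divides the monomial with exponent vector `γ`. -/
def IsBlockReduced (γ : (Σ i, κ i) →₀ ℕ) : Prop := ∀ i, ¬ blockExponent β i ≤ γ

variable {β}

lemma IsBlockReduced.nonpos_of_eq_add {γ γ' : (Σ i, κ i) →₀ ℕ} (hγ : IsBlockReduced β γ)
    {c : ι → ℤ} (h : ∀ x, (γ x : ℤ) = γ' x + c x.1 * β x.1 x.2) (i : ι) : c i ≤ 0 := by
  by_contra! hc
  refine hγ i ((blockExponent_le_iff β).2 fun j ↦ ?_)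
  have hle : (β i j : ℤ) ≤ c i * β i j := le_mul_of_one_le_left (by positivity) hc
  have := h ⟨i, j⟩
  dsimp only at this
  omega

end BlockExponent

section BlockDegree

variable {ι : Type*} [Fintype ι] {κ : ι → Type*} (β : ∀ i, κ i → ℕ)

/-- The lattice generated by the differences `β_i - β_j` of exponent vectors of block monomials,
that is, the vectors `∑ i, c i • β_i` with `∑ i, c i = 0`. -/
def blockLattice : AddSubgroup ((Σ i, κ i) → ℤ) where
  carrier := {v | ∃ c : ι → ℤ, ∑ i, c i = 0 ∧ ∀ x, v x = c x.1 * β x.1 x.2}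
  zero_mem' := ⟨0, by simp, by simp⟩
  add_mem' := by
    rintro v v' ⟨c, hc, hv⟩ ⟨c', hc', hv'⟩
    exact ⟨c + c', by simp [Finset.sum_add_distrib, hc, hc'], by simp [hv, hv', add_mul]⟩
  neg_mem' := by
    rintro v ⟨c, hc, hv⟩
    exact ⟨-c, by simp [hc], by simp [hv]⟩

/-- The finest grading group for which all block monomials have the same degree. -/
abbrev BlockDegreeGroup : Type _ := ((Σ i, κ i) → ℤ) ⧸ blockLattice β

/-- The degree of the monomial with a given exponent vector. -/
noncomputable def blockDegree : ((Σ i, κ i) →₀ ℕ) →+ BlockDegreeGroup β :=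
  (QuotientAddGroup.mk' (blockLattice β)).comp
    { toFun := fun γ x ↦ (γ x : ℤ)
      map_zero' := by ext; simp
      map_add' := fun γ γ' ↦ by ext; simp }

lemma blockDegree_eq_iff {γ γ' : (Σ i, κ i) →₀ ℕ} :
    blockDegree β γ = blockDegree β γ' ↔
      ∃ c : ι → ℤ, ∑ i, c i = 0 ∧ ∀ x, (γ x : ℤ) = γ' x + c x.1 * β x.1 x.2 := by
  rw [eq_comm]
  refine QuotientAddGroup.eq.trans (exists_congr fun c ↦ and_congr_right fun _ ↦
    forall_congr' fun x ↦ ?_)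
  simp only [AddMonoidHom.coe_mk, ZeroHom.coe_mk, Pi.add_apply, Pi.neg_apply]
  constructor <;> intro h <;> linarith

variable [∀ i, Fintype (κ i)]

lemma blockDegree_blockExponent (i i' : ι) :
    blockDegree β (blockExponent β i) = blockDegree β (blockExponent β i') := by
  classical
  refine (blockDegree_eq_iff β).2 ⟨Pi.single i 1 - Pi.single i' 1, by simp, fun x ↦ ?_⟩
  simp only [blockExponent_apply, Pi.sub_apply, Pi.single_apply]
  split_ifs <;> simp

variable {β}

lemma IsBlockReduced.eq_of_blockDegree_eq {γ γ' : (Σ i, κ i) →₀ ℕ} (hγ : IsBlockReduced β γ)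
    (hγ' : IsBlockReduced β γ') {i₀ : ι} {m m' : ℕ}
    (h : blockDegree β (γ + m • blockExponent β i₀) =
      blockDegree β (γ' + m' • blockExponent β i₀)) :
    γ = γ' ∧ m = m' := by
  classical
  obtain ⟨c, hc, hcγ⟩ := (blockDegree_eq_iff β).1 h
  obtain ⟨e, hsum, he⟩ : ∃ e : ι → ℤ, ∑ i, e i = m' - m ∧
      ∀ x, (γ x : ℤ) = γ' x + e x.1 * β x.1 x.2 := by
    refine ⟨c + Pi.single i₀ ((m' : ℤ) - m), by simp [Finset.sum_add_distrib, hc], fun x ↦ ?_⟩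
    have := hcγ x
    simp only [Finsupp.add_apply, Finsupp.smul_apply, smul_eq_mul, blockExponent_apply,
      Nat.cast_add, Nat.cast_mul, Pi.add_apply, Pi.single_apply] at this ⊢
    split_ifs at this ⊢ <;> push_cast at this <;> linarith
  have hle : ∀ i, e i ≤ 0 := hγ.nonpos_of_eq_add he
  have hge : ∀ i, (-e) i ≤ 0 := hγ'.nonpos_of_eq_add fun x ↦ by rw [he x, Pi.neg_apply]; ring
  have hzero : e = 0 := funext fun i ↦ le_antisymm (hle i) (by simpa using hge i)
  subst hzero
  constructor
  · ext x
    simpa using he x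
  · simp only [Pi.zero_apply, Finset.sum_const_zero] at hsum
    omega

lemma mem_blockLattice_of_nsmul_mem
    (hβ : Pairwise fun i i' ↦ (Finset.univ.gcd (β i)).Coprime (Finset.univ.gcd (β i')))
    {n : ℕ} (hn : n ≠ 0) {v : (Σ i, κ i) → ℤ} (hv : n • v ∈ blockLattice β) :
    v ∈ blockLattice β := by
  obtain ⟨c, hc, hcv⟩ := hv
  have hdvd_mul : ∀ i, (n : ℤ) ∣ c i * (Finset.univ.gcd (β i) : ℕ) := fun i ↦ by
    have : n ∣ Finset.univ.gcd fun j ↦ (c i).natAbs * β i j := Finset.dvd_gcd fun j _ ↦ by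
      have hj : (n : ℤ) ∣ c i * β i j := ⟨v ⟨i, j⟩, by rw [← hcv ⟨i, j⟩]; simp⟩
      simpa [Int.natAbs_mul] using Int.natCast_dvd.1 hj
    rw [Finset.gcd_mul_left] at this
    simpa [Int.natCast_dvd, Int.natAbs_mul] using this
  have hdvd : ∀ i, (n : ℤ) ∣ c i :=
    dvd_of_sum_eq_zero_of_pairwise_isCoprime (fun i i' hii' ↦ (hβ hii').isCoprime) hc hdvd_mul
  choose e he using hdvd
  have hn' : (n : ℤ) ≠ 0 := Nat.cast_ne_zero.2 hn
  refine ⟨e, mul_left_cancel₀ hn' ?_, fun x ↦ mul_left_cancel₀ hn' ?_⟩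
  · rw [Finset.mul_sum, mul_zero, ← hc]
    simp only [he]
  · rw [← mul_assoc, ← he, ← hcv]
    simp

lemma isAddTorsionFree_blockDegreeGroup
    (hβ : Pairwise fun i i' ↦ (Finset.univ.gcd (β i)).Coprime (Finset.univ.gcd (β i'))) :
    IsAddTorsionFree (BlockDegreeGroup β) where
  nsmul_right_injective n hn := by
    intro a b hab
    obtain ⟨v, rfl⟩ := QuotientAddGroup.mk_surjective a
    obtain ⟨v', rfl⟩ := QuotientAddGroup.mk_surjective b
    refine QuotientAddGroup.eq.2 (mem_blockLattice_of_nsmul_mem hβ hn ?_)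
    rw [smul_add, smul_neg]
    exact QuotientAddGroup.eq.1 hab

lemma isDomain_addMonoidAlgebra_blockDegreeGroup (L : Type*) [CommRing L] [IsDomain L]
    (hβ : Pairwise fun i i' ↦ (Finset.univ.gcd (β i)).Coprime (Finset.univ.gcd (β i'))) :
    IsDomain (AddMonoidAlgebra L (BlockDegreeGroup β)) := by
  have := isAddTorsionFree_blockDegreeGroup hβ
  have : AddGroup.FG ((Σ i, κ i) → ℤ) := Module.Finite.iff_addGroup_fg.1 inferInstance
  have : AddMonoid.FG (BlockDegreeGroup β) := AddGroup.fg_iff_addMonoid_fg.1 inferInstance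
  exact NoZeroDivisors.to_isDomain _

end BlockDegree

section Trinomial

variable {ι : Type*} {κ : ι → Type*} [∀ i, Fintype (κ i)] (β : ∀ i, κ i → ℕ)

/-- The value `∏ j, z_{ij} ^ β_{ij}` of the `i`-th block monomial at the point `z`. -/
def blockValue {N : Type*} [CommMonoid N] (z : (Σ i, κ i) → N) (i : ι) : N :=
  ∏ j, z ⟨i, j⟩ ^ β i j

lemma prod_blockExponent {N : Type*} [CommMonoid N] (z : (Σ i, κ i) → N) (i : ι) :
    ((blockExponent β i).prod fun x n ↦ z x ^ n) = blockValue β z i := by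
  rw [blockExponent, Finsupp.prod_embDomain, Finsupp.prod_fintype _ _ fun j ↦ pow_zero _]
  rfl

/-- The block monomial `T_i^{β_i}`. -/
noncomputable def blockMonomial (R : Type*) [CommSemiring R] (i : ι) :
    MvPolynomial (Σ i, κ i) R :=
  blockValue β X i

lemma blockMonomial_eq_monomial (R : Type*) [CommSemiring R] (i : ι) :
    blockMonomial β R i = monomial (blockExponent β i) 1 := by
  rw [monomial_eq, C_1, one_mul, prod_blockExponent, blockMonomial]

/-- The trinomials `T_{i₀} + λ_i T_{i₁} + T_i` with `i ≠ i₀, i₁`. -/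
def trinomials {R : Type*} [CommRing R] (lam : ι → R) (i₀ i₁ : ι) :
    Set (MvPolynomial (Σ i, κ i) R) :=
  {p | ∃ i, i ≠ i₀ ∧ i ≠ i₁ ∧
    p = blockMonomial β R i₀ + C (lam i) * blockMonomial β R i₁ + blockMonomial β R i}

/-- The ideal generated by the trinomials. -/
noncomputable abbrev trinomialIdeal {R : Type*} [CommRing R] (lam : ι → R) (i₀ i₁ : ι) :
    Ideal (MvPolynomial (Σ i, κ i) R) :=
  Ideal.span (trinomials β lam i₀ i₁)

/-- Weights of the variables for which every block monomial has the same weight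
`∏ i, ∑ j, β_{ij}`. -/
def balancedWeight [Fintype ι] [DecidableEq ι] (x : Σ i, κ i) : ℕ :=
  ∏ i ∈ Finset.univ.erase x.1, ∑ j, β i j

lemma isWeightedHomogeneous_blockMonomial [Fintype ι] [DecidableEq ι] (R : Type*)
    [CommSemiring R] (i : ι) :
    IsWeightedHomogeneous (balancedWeight β) (blockMonomial β R i) (∏ i, ∑ j, β i j) := by
  rw [← Finset.mul_prod_erase _ _ (Finset.mem_univ i), Finset.sum_mul]
  refine IsWeightedHomogeneous.prod _ _ _ fun j _ ↦ ?_
  exact (isWeightedHomogeneous_X R _ _).pow _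

lemma isWeightedHomogeneous_of_mem_trinomials [Fintype ι] [DecidableEq ι] {R : Type*} [CommRing R]
    {lam : ι → R} {i₀ i₁ : ι} {p : MvPolynomial (Σ i, κ i) R} (hp : p ∈ trinomials β lam i₀ i₁) :
    IsWeightedHomogeneous (balancedWeight β) p (∏ i, ∑ j, β i j) := by
  obtain ⟨i, -, -, rfl⟩ := hp
  have hmul : IsWeightedHomogeneous (balancedWeight β) (C (lam i) * blockMonomial β R i₁)
      (0 + ∏ i, ∑ j, β i j) :=
    (isWeightedHomogeneous_C _ _).mul (isWeightedHomogeneous_blockMonomial β R i₁)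
  rw [zero_add] at hmul
  exact ((isWeightedHomogeneous_blockMonomial β R i₀).add hmul).add
    (isWeightedHomogeneous_blockMonomial β R i)

variable {β} in
lemma balancedWeight_ne_zero [Fintype ι] [DecidableEq ι] (hβ : ∀ i, β i ≠ 0) (x : Σ i, κ i) :
    balancedWeight β x ≠ 0 :=
  Finset.prod_ne_zero_iff.2 fun i _ ↦ sum_ne_zero_of_ne_zero (hβ i)

variable {β} in
lemma trinomialIdeal_le_ker_constantCoeff (hβ : ∀ i, β i ≠ 0) {R : Type*} [CommRing R]
    (lam : ι → R) (i₀ i₁ : ι) :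
    trinomialIdeal β lam i₀ i₁ ≤ RingHom.ker (constantCoeff (R := R)) := by
  have hblock : ∀ i, constantCoeff (blockMonomial β R i) = 0 := fun i ↦ by
    classical
    rw [blockMonomial_eq_monomial, constantCoeff_monomial, if_neg (blockExponent_ne_zero (hβ i))]
  refine Ideal.span_le.2 ?_
  rintro _ ⟨i, -, -, rfl⟩
  simp [hblock]

section Span

variable {R : Type*} [CommRing R] (lam : ι → R) (i₀ i₁ : ι)

/-- The family of products of a monomial not divisible by any block monomial with
powers of the block monomials `T_{i₀}` and `T_{i₁}`. -/
noncomputable def normalMonomial (R : Type*) [CommRing R] (i₀ i₁ : ι)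
    (s : {γ // IsBlockReduced β γ} × ℕ × ℕ) :
    MvPolynomial (Σ i, κ i) R :=
  monomial s.1.1 1 * blockMonomial β R i₀ ^ s.2.1 * blockMonomial β R i₁ ^ s.2.2

/-- The polynomials congruent modulo the trinomials to a combination of normal monomials. -/
noncomputable def normalSpan : Submodule R (MvPolynomial (Σ i, κ i) R) :=
  Submodule.span R (Set.range (normalMonomial β R i₀ i₁)) ⊔
    (trinomialIdeal β lam i₀ i₁).restrictScalars R

variable {β lam i₀ i₁}

lemma mem_normalSpan_of_mem_trinomialIdeal {p : MvPolynomial (Σ i, κ i) R}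
    (hp : p ∈ trinomialIdeal β lam i₀ i₁) : p ∈ normalSpan β lam i₀ i₁ :=
  Submodule.mem_sup_right ((Submodule.restrictScalars_mem R _ _).2 hp)

lemma mul_mem_normalSpan_of_forall_normalMonomial {p q : MvPolynomial (Σ i, κ i) R}
    (hp : p ∈ normalSpan β lam i₀ i₁)
    (hq : ∀ s, q * normalMonomial β R i₀ i₁ s ∈ Set.range (normalMonomial β R i₀ i₁)) :
    q * p ∈ normalSpan β lam i₀ i₁ := by
  obtain ⟨a, ha, b, hb, rfl⟩ := Submodule.mem_sup.1 hp
  rw [mul_add]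
  refine add_mem (Submodule.mem_sup_left ?_) (mem_normalSpan_of_mem_trinomialIdeal
    (Ideal.mul_mem_left _ q ((Submodule.restrictScalars_mem R _ _).1 hb)))
  clear hp
  induction ha using Submodule.span_induction with
  | mem a ha =>
    obtain ⟨s, rfl⟩ := ha
    exact Submodule.subset_span (hq s)
  | zero => rw [mul_zero]; exact zero_mem _
  | add a a' _ _ ha ha' => rw [mul_add]; exact add_mem ha ha'
  | smul r a _ ha => rw [mul_smul_comm]; exact Submodule.smul_mem _ r ha

lemma blockMonomial_mul_mem_normalSpan {p : MvPolynomial (Σ i, κ i) R}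
    (hp : p ∈ normalSpan β lam i₀ i₁) (i : ι) :
    blockMonomial β R i * p ∈ normalSpan β lam i₀ i₁ := by
  have h₀ : blockMonomial β R i₀ * p ∈ normalSpan β lam i₀ i₁ :=
    mul_mem_normalSpan_of_forall_normalMonomial hp fun s ↦
      ⟨(s.1, s.2.1 + 1, s.2.2), by simp only [normalMonomial]; ring⟩
  have h₁ : blockMonomial β R i₁ * p ∈ normalSpan β lam i₀ i₁ :=
    mul_mem_normalSpan_of_forall_normalMonomial hp fun s ↦
      ⟨(s.1, s.2.1, s.2.2 + 1), by simp only [normalMonomial]; ring⟩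
  by_cases hi₀ : i = i₀
  · rwa [hi₀]
  by_cases hi₁ : i = i₁
  · rwa [hi₁]
  have htrinomial : p * (blockMonomial β R i₀ + C (lam i) * blockMonomial β R i₁ +
      blockMonomial β R i) ∈ normalSpan β lam i₀ i₁ :=
    mem_normalSpan_of_mem_trinomialIdeal <|
      Ideal.mul_mem_left _ p (Ideal.subset_span ⟨i, hi₀, hi₁, rfl⟩)
  convert sub_mem (sub_mem htrinomial h₀) (Submodule.smul_mem _ (lam i) h₁) using 1
  rw [smul_eq_C_mul]
  ring

lemma normalSpan_eq_top (hβ : ∀ i, β i ≠ 0) : normalSpan β lam i₀ i₁ = ⊤ := by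
  have hmonomial : ∀ γ : (Σ i, κ i) →₀ ℕ, monomial γ 1 ∈ normalSpan β lam i₀ i₁ := by
    intro γ
    induction γ using WellFoundedLT.induction with
    | ind γ ih =>
      by_cases hγ : IsBlockReduced β γ
      · refine Submodule.mem_sup_left (Submodule.subset_span ⟨(⟨γ, hγ⟩, 0, 0), ?_⟩)
        simp [normalMonomial]
      · obtain ⟨i, hi⟩ := not_forall_not.1 hγ
        obtain ⟨δ, rfl⟩ := exists_add_of_le hi
        have hδ : δ < blockExponent β i + δ :=
          lt_add_of_pos_left δ (pos_iff_ne_zero.2 (blockExponent_ne_zero (hβ i)))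
        have := blockMonomial_mul_mem_normalSpan (ih δ hδ) i
        rwa [blockMonomial_eq_monomial, monomial_mul, one_mul] at this
  refine eq_top_iff.2 fun p _ ↦ ?_
  rw [p.as_sum]
  refine sum_mem fun γ _ ↦ ?_
  simpa [smul_monomial] using Submodule.smul_mem _ (p.coeff γ) (hmonomial γ)

end Span

end Trinomial

section BlockValue

variable {ι : Type*} {κ : ι → Type*} [∀ i, Fintype (κ i)] {β : ∀ i, κ i → ℕ}
  {F K : Type*} [CommRing F] [IsDomain F] [Field K] [Algebra F K] [IsAlgClosed K]

lemma exists_blockValue_eq (hβ : ∀ i, β i ≠ 0) {v : ι → K} (hv : ∀ i, v i ≠ 0) :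
    ∃ z : (Σ i, κ i) → K, (∀ x, z x ≠ 0) ∧ ∀ i, blockValue β z i = v i := by
  choose y hy using fun i ↦
    IsAlgClosed.exists_pow_nat_eq (v i) (Nat.pos_of_ne_zero (sum_ne_zero_of_ne_zero (hβ i)))
  refine ⟨fun x ↦ y x.1, fun x (h : y x.1 = 0) ↦ hv x.1 ?_, fun i ↦ ?_⟩
  · rw [← hy, h, zero_pow (sum_ne_zero_of_ne_zero (hβ x.1))]
  · rw [← hy, ← Finset.prod_pow_eq_pow_sum, blockValue]

lemma exists_blockValue_trinomial_eq_zero (hβ : ∀ i, β i ≠ 0) (lam : ι → F) {i₀ i₁ : ι}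
    (hi : i₀ ≠ i₁) {t : K} (ht : Transcendental F t) :
    ∃ z : (Σ i, κ i) → K, (∀ x, z x ≠ 0) ∧ blockValue β z i₀ = 1 ∧ blockValue β z i₁ = t ∧
      ∀ i, i ≠ i₀ → i ≠ i₁ → blockValue β z i₀ +
        algebraMap F K (lam i) * blockValue β z i₁ + blockValue β z i = 0 := by
  classical
  let v (i : ι) : K :=
    if i = i₀ then 1 else if i = i₁ then t else -(1 + algebraMap F K (lam i) * t)
  have hv : ∀ i, v i ≠ 0 := fun i ↦ by
    simp only [v]
    split_ifs
    · exact one_ne_zero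
    · exact fun h ↦ ht (h ▸ isAlgebraic_zero)
    · refine neg_ne_zero.2 fun h ↦ ?_
      refine ht ⟨1 + Polynomial.C (lam i) * Polynomial.X, fun h0 ↦ ?_, by simpa using h⟩
      simpa using congr_arg (Polynomial.eval 0) h0
  obtain ⟨z, hz, hzv⟩ := exists_blockValue_eq hβ hv
  refine ⟨z, hz, by simp [hzv, v], by simp [hzv, v, hi.symm], fun i hi₀ hi₁ ↦ ?_⟩
  simp [hzv, v, hi₀, hi₁, hi.symm]

end BlockValue

section GroupAlgebra

variable {ι : Type*} [Fintype ι] {κ : ι → Type*} (β : ∀ i, κ i → ℕ) {F K : Type*}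
  [CommRing F] [CommRing K] [Algebra F K]

/-- The homomorphism to the group algebra of the grading group which sends each variable to its
degree, scaled by a coordinate of `z`. -/
noncomputable def toGroupAlgebra (F : Type*) [CommRing F] [Algebra F K] (z : (Σ i, κ i) → K) :
    MvPolynomial (Σ i, κ i) F →ₐ[F] AddMonoidAlgebra K (BlockDegreeGroup β) :=
  aeval fun x ↦ AddMonoidAlgebra.single (blockDegree β (Finsupp.single x 1)) (z x)

lemma toGroupAlgebra_monomial_one (z : (Σ i, κ i) → K) (γ : (Σ i, κ i) →₀ ℕ) :
    toGroupAlgebra β F z (monomial γ 1) =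
      AddMonoidAlgebra.single (blockDegree β γ) (γ.prod fun x n ↦ z x ^ n) := by
  have hdeg : (γ.sum fun x n ↦ n • blockDegree β (Finsupp.single x 1)) = blockDegree β γ := by
    conv_rhs => rw [← γ.sum_single, map_finsuppSum]
    simp only [← map_nsmul, Finsupp.smul_single_one]
  rw [toGroupAlgebra, aeval_monomial, map_one, one_mul]
  simp only [AddMonoidAlgebra.single_pow]
  rw [AddMonoidAlgebra.finsuppProd_single, hdeg]

variable [∀ i, Fintype (κ i)]

lemma toGroupAlgebra_blockMonomial (z : (Σ i, κ i) → K) (i i₀ : ι) :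
    toGroupAlgebra β F z (blockMonomial β F i) =
      AddMonoidAlgebra.single (blockDegree β (blockExponent β i₀)) (blockValue β z i) := by
  rw [blockMonomial_eq_monomial, toGroupAlgebra_monomial_one, blockDegree_blockExponent β i i₀,
    prod_blockExponent]

variable {β} {lam : ι → F} {i₀ i₁ : ι} {z : (Σ i, κ i) → K}

lemma trinomialIdeal_le_ker_toGroupAlgebra
    (hz : ∀ i, i ≠ i₀ → i ≠ i₁ → blockValue β z i₀ +
      algebraMap F K (lam i) * blockValue β z i₁ + blockValue β z i = 0) :
    trinomialIdeal β lam i₀ i₁ ≤ RingHom.ker (toGroupAlgebra β F z) := by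
  refine Ideal.span_le.2 ?_
  rintro _ ⟨i, hi₀, hi₁, rfl⟩
  rw [SetLike.mem_coe, RingHom.mem_ker, ← smul_eq_C_mul, map_add, map_add, map_smul,
    toGroupAlgebra_blockMonomial β z i₀ i₀, toGroupAlgebra_blockMonomial β z i₁ i₀,
    toGroupAlgebra_blockMonomial β z i i₀, AddMonoidAlgebra.smul_single,
    ← AddMonoidAlgebra.single_add, ← AddMonoidAlgebra.single_add, Algebra.smul_def,
    hz i hi₀ hi₁, AddMonoidAlgebra.single_zero]

lemma toGroupAlgebra_normalMonomial (hz₀ : blockValue β z i₀ = 1)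
    (s : {γ // IsBlockReduced β γ} × ℕ × ℕ) :
    toGroupAlgebra β F z (normalMonomial β F i₀ i₁ s) = AddMonoidAlgebra.single
      (blockDegree β (s.1.1 + (s.2.1 + s.2.2) • blockExponent β i₀))
      ((s.1.1.prod fun x n ↦ z x ^ n) * blockValue β z i₁ ^ s.2.2) := by
  rw [normalMonomial, map_mul, map_mul, map_pow, map_pow, toGroupAlgebra_monomial_one,
    toGroupAlgebra_blockMonomial β z i₀ i₀, toGroupAlgebra_blockMonomial β z i₁ i₀, hz₀]
  simp only [AddMonoidAlgebra.single_pow, AddMonoidAlgebra.single_mul_single, one_pow, mul_one,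
    map_add, map_nsmul, add_smul, add_assoc]

lemma linearIndependent_toGroupAlgebra_normalMonomial [IsDomain K] (hz : ∀ x, z x ≠ 0)
    (hz₀ : blockValue β z i₀ = 1)
    (hz₁ : Transcendental F (blockValue β z i₁)) :
    LinearIndependent F ((toGroupAlgebra β F z).toLinearMap ∘ normalMonomial β F i₀ i₁) := by
  let degree (p : {γ // IsBlockReduced β γ} × ℕ) : BlockDegreeGroup β :=
    blockDegree β (p.1.1 + p.2 • blockExponent β i₀)
  have hdegree : Function.Injective degree := fun p p' h ↦ by
    obtain ⟨h₁, h₂⟩ := p.1.2.eq_of_blockDegree_eq p'.1.2 h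
    exact Prod.ext (Subtype.ext h₁) h₂
  have hcoeff : ∀ p : {γ // IsBlockReduced β γ} × ℕ, LinearIndependent F fun n : ℕ ↦
      (p.1.1.prod fun x n ↦ z x ^ n) * blockValue β z i₁ ^ n := fun p ↦
    linearIndependent_mul_pow_of_transcendental
      (Finset.prod_ne_zero_iff.2 fun x _ ↦ pow_ne_zero _ (hz x)) hz₁
  have hindex : Function.Injective fun s : {γ // IsBlockReduced β γ} × ℕ × ℕ ↦
      ((s.1, s.2.1 + s.2.2), s.2.2) := by
    rintro ⟨γ, a, b⟩ ⟨γ', a', b'⟩ h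
    simp only [Prod.mk.injEq] at h ⊢
    exact ⟨h.1.1, by omega, h.2⟩
  have hcomp : (toGroupAlgebra β F z).toLinearMap ∘ normalMonomial β F i₀ i₁ =
      (fun s ↦ AddMonoidAlgebra.single (degree s.1)
        ((s.1.1.1.prod fun x n ↦ z x ^ n) * blockValue β z i₁ ^ s.2)) ∘
          fun s ↦ ((s.1, s.2.1 + s.2.2), s.2.2) :=
    funext fun s ↦ by simp only [Function.comp_apply, AlgHom.toLinearMap_apply,
      toGroupAlgebra_normalMonomial hz₀, degree]
  rw [hcomp]
  exact (linearIndependent_addMonoidAlgebra_single hdegree hcoeff).comp _ hindex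

lemma ker_toGroupAlgebra [IsDomain K] (hβ : ∀ i, β i ≠ 0) (hz : ∀ x, z x ≠ 0)
    (hz₀ : blockValue β z i₀ = 1)
    (hz₁ : Transcendental F (blockValue β z i₁))
    (hzi : ∀ i, i ≠ i₀ → i ≠ i₁ → blockValue β z i₀ +
      algebraMap F K (lam i) * blockValue β z i₁ + blockValue β z i = 0) :
    RingHom.ker (toGroupAlgebra β F z) = trinomialIdeal β lam i₀ i₁ := by
  have hle := trinomialIdeal_le_ker_toGroupAlgebra hzi
  refine le_antisymm (fun p hp ↦ ?_) hle
  obtain ⟨q, hq, r, hr, rfl⟩ :=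
    Submodule.mem_sup.1 (normalSpan_eq_top (lam := lam) (i₀ := i₀) (i₁ := i₁) hβ ▸
      Submodule.mem_top : p ∈ normalSpan β lam i₀ i₁)
  have hq_ker : toGroupAlgebra β F z q = 0 :=
    (Ideal.add_mem_iff_left _ (hle hr)).1 hp
  have hq_zero : q = 0 := eq_zero_of_mem_span_range_of_linearIndependent_comp
    (linearIndependent_toGroupAlgebra_normalMonomial hz hz₀ hz₁) hq hq_ker
  rwa [hq_zero, zero_add]

end GroupAlgebra

section Units

variable {ι : Type*} [Finite ι] {κ : ι → Type*} [∀ i, Fintype (κ i)] {β : ∀ i, κ i → ℕ}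
  {R : Type*} [CommRing R] [IsDomain R]

theorem isPrime_trinomialIdeal (hβ : ∀ i, β i ≠ 0)
    (hcop : Pairwise fun i i' ↦ (Finset.univ.gcd (β i)).Coprime (Finset.univ.gcd (β i')))
    (lam : ι → R) {i₀ i₁ : ι} (hi : i₀ ≠ i₁) : (trinomialIdeal β lam i₀ i₁).IsPrime := by
  have := Fintype.ofFinite ι
  have ht : Transcendental R (algebraMap (RatFunc R) (AlgebraicClosure (RatFunc R)) RatFunc.X) :=
    (transcendental_algebraMap_iff (algebraMap (RatFunc R) _).injective).2 RatFunc.transcendental_X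
  obtain ⟨z, hz, hz₀, hz₁, hzi⟩ := exists_blockValue_trinomial_eq_zero hβ lam hi ht
  have := isDomain_addMonoidAlgebra_blockDegreeGroup (AlgebraicClosure (RatFunc R)) hcop
  rw [← ker_toGroupAlgebra hβ hz hz₀ (by rwa [hz₁]) hzi]
  exact RingHom.ker_isPrime _

theorem trinomialData_units_general (hβ : ∀ i, β i ≠ 0)
    (hcop : Pairwise fun i i' ↦ (Finset.univ.gcd (β i)).Coprime (Finset.univ.gcd (β i')))
    (lam : ι → R) {i₀ i₁ : ι} (hi : i₀ ≠ i₁)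
    (u : (MvPolynomial (Σ i, κ i) R ⧸ trinomialIdeal β lam i₀ i₁)ˣ) :
    ∃ c : R, IsUnit c ∧ (u : MvPolynomial (Σ i, κ i) R ⧸ trinomialIdeal β lam i₀ i₁) =
      algebraMap R (MvPolynomial (Σ i, κ i) R ⧸ trinomialIdeal β lam i₀ i₁) c := by
  classical
  have := Fintype.ofFinite ι
  have := isPrime_trinomialIdeal hβ hcop lam hi
  obtain ⟨p, hp⟩ := Ideal.Quotient.mk_surjective u.val
  have hunit : IsUnit (Ideal.Quotient.mk (trinomialIdeal β lam i₀ i₁) p) := hp ▸ u.isUnit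
  refine ⟨constantCoeff p, isUnit_constantCoeff_of_isUnit_mk
    (trinomialIdeal_le_ker_constantCoeff hβ lam i₀ i₁) hunit, ?_⟩
  rw [← hp]
  exact mk_eq_algebraMap_constantCoeff_of_isUnit
    (fun q hq ↦ ⟨_, isWeightedHomogeneous_of_mem_trinomials β hq⟩) (balancedWeight_ne_zero hβ)
    hunit

end Units

lemma TrinomialData.relIdeal_eq_trinomialIdeal (Δ : TrinomialData k) :
    Δ.relIdeal = trinomialIdeal Δ.β Δ.lam 0 1 := by
  have hr := Δ.one_le_r
  have hindex : ∀ i : Fin (Δ.r + 1), 2 ≤ (i : ℕ) ↔ i ≠ 0 ∧ i ≠ 1 := fun i ↦ by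
    rw [Fin.ne_iff_vne, Fin.ne_iff_vne, Fin.val_zero, Fin.val_one', Nat.mod_eq_of_lt (by omega)]
    omega
  simp only [relIdeal, hindex, and_assoc]
  rfl

lemma TrinomialData.zero_ne_one (Δ : TrinomialData k) : (0 : Fin (Δ.r + 1)) ≠ 1 := by
  have : NeZero Δ.r := ⟨Nat.one_le_iff_ne_zero.1 Δ.one_le_r⟩
  exact Fin.zero_ne_one'

lemma TrinomialData.β_ne_zero (Δ : TrinomialData k) (i : Fin (Δ.r + 1)) : Δ.β i ≠ 0 :=
  fun h ↦ (Δ.β_pos i ⟨0, Δ.one_le_n i⟩).ne' (congr_fun h _)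

/-- For trinomial data `Δ` over a field `k`, `(k[Δ])^* = k^*`: every unit of
`k[Δ]` is the image of a nonzero scalar (and conversely every nonzero scalar is a unit). -/
theorem trinomialData_units (Δ : TrinomialData k) :
    ∀ u : (Δ.Ring)ˣ, ∃ c : k, c ≠ 0 ∧ (u : Δ.Ring) = algebraMap k Δ.Ring c := by
  unfold TrinomialData.Ring
  rw [Δ.relIdeal_eq_trinomialIdeal]
  intro u
  obtain ⟨c, hc, hu⟩ := trinomialData_units_general Δ.β_ne_zero
    (fun i i' ↦ Δ.gcd_coprime i i') Δ.lam Δ.zero_ne_one u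
  exact ⟨c, hc.ne_zero, hu⟩
end

section
/- Let k be a field and let B = k[Δ] for reduced trinomial data Δ using a partition of the integer n ≥ 2. Let m ⊂ B be the maximal ideal generated by the images of all the variables t_{ij} (the Δ-origin). Then dim_k(m/m²) = n; consequently, the minimum number of generators of B as a k-algebra is n. -/
open MvPolynomial

variable {k : Type*} [Field k]

/-!
The trinomial relations of reduced data have no terms of degree less than two, so `k[Δ]` is a
quotient of a polynomial ring by an ideal contained in `𝔫²`, where `𝔫` is generated by the
variables. Dividing by such an ideal does not change `𝔫 / 𝔫²`, so the classes of the variables form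
a basis of `𝔪 / 𝔪²`. Conversely, at any `k`-point `ε` of an algebra, `a ↦ [a - ε a]` is a derivation
onto the cotangent space of `ker ε`, so the classes of any algebra generators span that space.
-/

section Augmentation

variable {R A : Type*} [CommRing R] [CommRing A] [Algebra R A] (ε : A →ₐ[R] R)

theorem sub_algebraMap_mem_ker (a : A) : a - algebraMap R A (ε a) ∈ RingHom.ker ε := by
  simp [RingHom.mem_ker]

theorem smul_cotangent_ker (a : A) (y : (RingHom.ker ε).Cotangent) : a • y = ε a • y := by
  rw [← algebraMap_smul A (ε a) y, ← sub_eq_zero, ← sub_smul]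
  exact y.smul_eq_zero_of_mem (sub_algebraMap_mem_ker ε a)

/-- The derivation `a ↦ [a - ε a]` of `A` into the cotangent space at the point `ε` of `Spec A`,
which is the differential of functions at that point. -/
noncomputable def cotangentDerivation : Derivation R A (RingHom.ker ε).Cotangent :=
  Derivation.mk'
    { toFun a := (RingHom.ker ε).toCotangent ⟨_, sub_algebraMap_mem_ker ε a⟩
      map_add' a b := by
        rw [← map_add]
        congr 2
        simp only [map_add, add_sub_add_comm]
      map_smul' r a := by
        rw [RingHom.id_apply, ← algebraMap_smul A r (Ideal.toCotangent _ _), ← map_smul]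
        congr 2
        simp only [map_smul, smul_eq_mul, map_mul, smul_sub, ← Algebra.smul_def] }
    fun a b => by
      change Ideal.toCotangent _ _ = a • Ideal.toCotangent _ _ + b • Ideal.toCotangent _ _
      rw [← map_smul, ← map_smul, ← map_add, eq_comm, Ideal.toCotangent_eq, pow_two]
      convert Ideal.mul_mem_mul (sub_algebraMap_mem_ker ε a) (sub_algebraMap_mem_ker ε b) using 1
      simp only [Submodule.coe_add, Submodule.coe_smul, smul_eq_mul, map_mul]
      ring

theorem cotangentDerivation_of_mem_ker {a : A} (ha : a ∈ RingHom.ker ε) :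
    cotangentDerivation ε a = (RingHom.ker ε).toCotangent ⟨a, ha⟩ := by
  have hεa : ε a = 0 := ha
  change Ideal.toCotangent _ _ = _
  simp only [hεa, map_zero, sub_zero]

theorem cotangentDerivation_eq_zero_iff {a : A} :
    cotangentDerivation ε a = 0 ↔ a - algebraMap R A (ε a) ∈ RingHom.ker ε ^ 2 :=
  Ideal.toCotangent_eq_zero _ _

theorem cotangentDerivation_surjective : Function.Surjective (cotangentDerivation ε) := by
  intro y
  obtain ⟨⟨a, ha⟩, rfl⟩ := (RingHom.ker ε).toCotangent_surjective y
  exact ⟨a, cotangentDerivation_of_mem_ker ε ha⟩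

theorem span_cotangentDerivation_image_eq_top {s : Set A} (hs : Algebra.adjoin R s = ⊤) :
    Submodule.span R (cotangentDerivation ε '' s) = ⊤ := by
  refine Submodule.eq_top_iff'.2 fun y => ?_
  obtain ⟨a, rfl⟩ := cotangentDerivation_surjective ε y
  have ha : a ∈ Algebra.adjoin R s := hs ▸ Algebra.mem_top
  induction ha using Algebra.adjoin_induction with
  | mem a ha => exact Submodule.subset_span ⟨a, ha, rfl⟩
  | algebraMap r => simp only [Derivation.map_algebraMap, zero_mem]
  | add a b _ _ iha ihb => exact map_add (cotangentDerivation ε) a b ▸ add_mem iha ihb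
  | mul a b _ _ iha ihb =>
    rw [Derivation.leibniz, smul_cotangent_ker, smul_cotangent_ker]
    exact add_mem (Submodule.smul_mem _ _ ihb) (Submodule.smul_mem _ _ iha)

theorem finrank_cotangent_ker_le_card [Nontrivial R] (s : Finset A)
    (hs : Algebra.adjoin R (s : Set A) = ⊤) :
    Module.finrank R (RingHom.ker ε).Cotangent ≤ s.card := by
  classical
  have hspan := span_cotangentDerivation_image_eq_top ε hs
  calc Module.finrank R (RingHom.ker ε).Cotangent
      = Set.finrank R (s.image (cotangentDerivation ε) : Set (RingHom.ker ε).Cotangent) := by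
        rw [Finset.coe_image, Set.finrank, hspan, finrank_top]
    _ ≤ (s.image (cotangentDerivation ε)).card := finrank_span_finset_le_card _
    _ ≤ s.card := Finset.card_image_le

theorem ker_eq_span_of_adjoin_eq_top {s : Set A} (hs : Algebra.adjoin R s = ⊤)
    (hε : ∀ a ∈ s, ε a = 0) :
    RingHom.ker ε = Ideal.span s := by
  refine le_antisymm (fun a ha => ?_) (Ideal.span_le.2 hε)
  suffices h : ∀ a, a - algebraMap R A (ε a) ∈ Ideal.span s by
    simpa [RingHom.mem_ker.1 ha] using h a
  intro a
  have ha : a ∈ Algebra.adjoin R s := hs ▸ Algebra.mem_top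
  induction ha using Algebra.adjoin_induction with
  | mem a ha => simpa [hε a ha] using Ideal.subset_span ha
  | algebraMap r => simp
  | add a b _ _ iha ihb =>
    rw [map_add, map_add, add_sub_add_comm]
    exact add_mem iha ihb
  | mul a b _ _ iha ihb =>
    have hsplit : a * b - algebraMap R A (ε (a * b)) =
        a * (b - algebraMap R A (ε b)) + algebraMap R A (ε b) * (a - algebraMap R A (ε a)) := by
      rw [map_mul, map_mul]
      ring
    exact hsplit ▸ add_mem (Ideal.mul_mem_left _ _ ihb) (Ideal.mul_mem_left _ _ iha)

end Augmentation

section QuotientByHigherOrderTerms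

variable {R σ : Type*} [CommRing R] {I : Ideal (MvPolynomial σ R)}

theorem adjoin_range_mk_X_eq_top (I : Ideal (MvPolynomial σ R)) :
    Algebra.adjoin R (Set.range fun v => Ideal.Quotient.mk I (X v)) = ⊤ := by
  have hrange : (Set.range fun v => Ideal.Quotient.mk I (X v)) =
      Ideal.Quotient.mkₐ R I '' Set.range X := Set.range_comp _ _
  rw [hrange, ← AlgHom.map_adjoin, adjoin_range_X, Algebra.map_top, AlgHom.range_eq_top]
  exact Ideal.Quotient.mkₐ_surjective R I

theorem coeff_single_one_eq_zero_of_mem_idealOfVars_sq {p : MvPolynomial σ R}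
    (hp : p ∈ idealOfVars σ R ^ 2) (v : σ) : p.coeff (Finsupp.single v 1) = 0 :=
  (mem_pow_idealOfVars_iff' 2 p).1 hp _ (by simp)

theorem coeff_single_one_linearCombination_X (c : σ →₀ R) (v : σ) :
    (Finsupp.linearCombination R (X : σ → MvPolynomial σ R) c).coeff (Finsupp.single v 1) =
      c v := by
  classical
  simp +contextual [Finsupp.linearCombination_apply, Finsupp.sum, coeff_sum, coeff_X,
    Finsupp.single_left_inj]

/-- The augmentation `p ↦ p(0)` of `R[σ] ⧸ I`, that is, the origin as an `R`-point of the zero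
locus of `I`. -/
noncomputable def evalOrigin (hI : I ≤ idealOfVars σ R) : (MvPolynomial σ R ⧸ I) →ₐ[R] R :=
  Ideal.Quotient.liftₐ I (aeval 0) fun p hp => by
    have hker : idealOfVars σ R ≤ RingHom.ker (aeval 0 : MvPolynomial σ R →ₐ[R] R) :=
      Ideal.span_le.2 <| Set.range_subset_iff.2 fun v => by simp [RingHom.mem_ker]
    exact hker (hI hp)

theorem evalOrigin_mk_X (hI : I ≤ idealOfVars σ R) (v : σ) :
    evalOrigin hI (Ideal.Quotient.mk I (X v)) = 0 :=
  aeval_X (R := R) 0 v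

theorem ker_evalOrigin (hI : I ≤ idealOfVars σ R) :
    RingHom.ker (evalOrigin hI) = Ideal.span (Set.range fun v => Ideal.Quotient.mk I (X v)) :=
  ker_eq_span_of_adjoin_eq_top _ (adjoin_range_mk_X_eq_top I) <|
    Set.forall_mem_range.2 (evalOrigin_mk_X hI)

theorem ker_evalOrigin_eq_map (hI : I ≤ idealOfVars σ R) :
    RingHom.ker (evalOrigin hI) = (idealOfVars σ R).map (Ideal.Quotient.mk I) := by
  rw [ker_evalOrigin, Ideal.map_span, ← Set.range_comp]
  rfl

theorem idealOfVars_sq_le : idealOfVars σ R ^ 2 ≤ idealOfVars σ R :=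
  Ideal.pow_le_self two_ne_zero

theorem coeff_single_one_eq_zero_of_cotangentDerivation_eq_zero (hI : I ≤ idealOfVars σ R ^ 2)
    {p : MvPolynomial σ R}
    (hp : cotangentDerivation (evalOrigin (hI.trans idealOfVars_sq_le)) (Ideal.Quotient.mk I p) = 0)
    (v : σ) : p.coeff (Finsupp.single v 1) = 0 := by
  set c := evalOrigin (hI.trans idealOfVars_sq_le) (Ideal.Quotient.mk I p)
  have hmk : Ideal.Quotient.mk I (p - C c) ∈ (idealOfVars σ R ^ 2).map (Ideal.Quotient.mk I) := by
    rw [Ideal.map_pow, ← ker_evalOrigin_eq_map (hI.trans idealOfVars_sq_le), map_sub]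
    exact (cotangentDerivation_eq_zero_iff _).1 hp
  have hsub : p - C c ∈ idealOfVars σ R ^ 2 := (Ideal.mem_quotient_iff_mem hI).1 hmk
  have hC : (C c : MvPolynomial σ R).coeff (Finsupp.single v 1) = 0 := by
    classical
    simp [coeff_C, eq_comm (a := (0 : σ →₀ ℕ))]
  simpa only [coeff_sub, hC, sub_zero] using
    coeff_single_one_eq_zero_of_mem_idealOfVars_sq hsub v

theorem linearIndependent_cotangentDerivation_mk_X (hI : I ≤ idealOfVars σ R ^ 2) :
    LinearIndependent R fun v => cotangentDerivation
      (evalOrigin (hI.trans idealOfVars_sq_le)) (Ideal.Quotient.mk I (X v)) := by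
  set d : MvPolynomial σ R →ₗ[R] _ :=
    (cotangentDerivation (evalOrigin (hI.trans idealOfVars_sq_le))).toLinearMap ∘ₗ
      (Ideal.Quotient.mkₐ R I).toLinearMap
  refine linearIndependent_iff.2 fun c hc => Finsupp.ext fun v => ?_
  have hd : d (Finsupp.linearCombination R X c) = 0 := by
    rw [Finsupp.apply_linearCombination]
    exact hc
  rw [← coeff_single_one_linearCombination_X c v, Finsupp.zero_apply]
  exact coeff_single_one_eq_zero_of_cotangentDerivation_eq_zero hI hd v

theorem mk_X_injective [Nontrivial R] (hI : I ≤ idealOfVars σ R ^ 2) :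
    Function.Injective fun v => Ideal.Quotient.mk I (X v) :=
  (linearIndependent_cotangentDerivation_mk_X hI).injective.of_comp

theorem finrank_cotangent_ker_evalOrigin [Nontrivial R] [Fintype σ]
    (hI : I ≤ idealOfVars σ R ^ 2) :
    Module.finrank R (RingHom.ker (evalOrigin (hI.trans idealOfVars_sq_le))).Cotangent =
      Fintype.card σ := by
  refine Module.finrank_eq_card_basis
    (Module.Basis.mk (linearIndependent_cotangentDerivation_mk_X hI) ?_)
  rw [← span_cotangentDerivation_image_eq_top _ (adjoin_range_mk_X_eq_top I), ← Set.range_comp]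
  rfl

theorem trinomialData_tangent_dim_general [Nontrivial R] [Fintype σ]
    (hI : I ≤ idealOfVars σ R ^ 2) :
    Module.finrank R
        (Ideal.span (Set.range fun v => Ideal.Quotient.mk I (X v))).Cotangent = Fintype.card σ ∧
      (∃ s : Finset (MvPolynomial σ R ⧸ I), s.card = Fintype.card σ ∧
        Algebra.adjoin R (s : Set (MvPolynomial σ R ⧸ I)) = ⊤) ∧
      ∀ s : Finset (MvPolynomial σ R ⧸ I),
        Algebra.adjoin R (s : Set (MvPolynomial σ R ⧸ I)) = ⊤ → Fintype.card σ ≤ s.card := by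
  classical
  have hcotangent := finrank_cotangent_ker_evalOrigin hI
  refine ⟨ker_evalOrigin (hI.trans idealOfVars_sq_le) ▸ hcotangent,
    ⟨Finset.univ.image fun v => Ideal.Quotient.mk I (X v), ?_, ?_⟩, fun s hs => ?_⟩
  · rw [Finset.card_image_of_injective _ (mk_X_injective hI), Finset.card_univ]
  · rw [Finset.coe_image, Finset.coe_univ, Set.image_univ, adjoin_range_mk_X_eq_top]
  · exact hcotangent ▸ finrank_cotangent_ker_le_card _ s hs

end QuotientByHigherOrderTerms

namespace TrinomialData

variable (Δ : TrinomialData k)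

instance : Fintype Δ.Vars :=
  inferInstanceAs (Fintype (Σ i : Fin (Δ.r + 1), Fin (Δ.n i)))

theorem card_vars : Fintype.card Δ.Vars = ∑ i, Δ.n i :=
  Fintype.card_sigma.trans (by simp only [Fintype.card_fin])

theorem mon_mem_idealOfVars_pow (i : Fin (Δ.r + 1)) :
    Δ.mon i ∈ idealOfVars Δ.Vars k ^ ∑ j, Δ.β i j := by
  rw [← Finset.prod_pow_eq_pow_sum]
  exact Ideal.prod_mem_prod fun j _ =>
    Ideal.pow_mem_pow (Ideal.subset_span (Set.mem_range_self (⟨i, j⟩ : Δ.Vars))) _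

variable {Δ}

theorem Reduced.relIdeal_le_idealOfVars_sq (hred : Δ.Reduced) :
    Δ.relIdeal ≤ idealOfVars Δ.Vars k ^ 2 := by
  refine Ideal.span_le.2 ?_
  rintro _ ⟨i, hi, rfl⟩
  obtain ⟨hr, -⟩ | ⟨-, hβ⟩ := hred
  · omega
  · have hmon (l : Fin (Δ.r + 1)) : Δ.mon l ∈ idealOfVars Δ.Vars k ^ 2 :=
      Ideal.pow_le_pow_right (hβ l) (Δ.mon_mem_idealOfVars_pow l)
    exact add_mem (add_mem (hmon 0) (Ideal.mul_mem_left _ _ (hmon 1))) (hmon i)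

end TrinomialData

/-- For reduced trinomial data `Δ` with partition of `n ≥ 2`, the tangent space
of `Spec k[Δ]` at the `Δ`-origin has dimension `n`, i.e. `dim_k 𝔪/𝔪² = n` where `𝔪` is the
ideal generated by the images of all the variables `t_{ij}`; consequently the minimum number of
generators of `k[Δ]` as a `k`-algebra is `n`. -/
theorem trinomialData_tangent_dim (Δ : TrinomialData k) (hred : Δ.Reduced) :
    Module.finrank k
        (Ideal.span (Set.range fun v : Δ.Vars =>
          Ideal.Quotient.mk Δ.relIdeal (X v)) : Ideal Δ.Ring).Cotangent = ∑ i, Δ.n i ∧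
      (∃ s : Finset Δ.Ring, s.card = ∑ i, Δ.n i ∧
        Algebra.adjoin k (s : Set Δ.Ring) = ⊤) ∧
      ∀ s : Finset Δ.Ring, Algebra.adjoin k (s : Set Δ.Ring) = ⊤ →
        ∑ i, Δ.n i ≤ s.card := by
  simpa only [Δ.card_vars] using
    trinomialData_tangent_dim_general hred.relIdeal_le_idealOfVars_sq
end
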